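/- arXiv:2009.02712 — 2 statements merged into one kernel-verified Lean document; each statement's English description precedes it below -/
import Mathlib

section
/- Let 0 < ρ₀ < 1 and λ₀ > 0. Then there exists a number T₀ = T₀(λ₀, ρ₀) > 0 such that for all t₀ ≥ T₀ and all λ ≥ λ₀, the function e_λ(ρ) = E_ρ(−λ t₀^ρ) is positive and strictly monotonically decreasing with respect to ρ on the interval [ρ₀, 1), and moreover e^{−λ t₀} < E_ρ(−λ t₀^ρ) ≤ E_{ρ₀}(−λ t₀^{ρ₀}) for every ρ ∈ [ρ₀, 1). -/
open Set Real

/-- The Mittag-Leffler function `E_ρ(z) = ∑_{k=0}^∞ z^k / Γ(ρk + 1)`. -/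
noncomputable def mittagLeffler (ρ z : ℝ) : ℝ := ∑' k : ℕ, z ^ k / Real.Gamma (ρ * k + 1)

open MeasureTheory Filter Topology


noncomputable def th : ℝ := 3 * π / 4
noncomputable def pt (u : ℝ) : ℂ := (u : ℂ) + (th : ℂ) * Complex.I

lemma th_pos : 0 < th := by unfold th; positivity
lemma cos_th : Real.cos th = -(√2 / 2) := by
  unfold th
  rw [show 3 * π / 4 = π - π / 4 by ring, Real.cos_pi_sub, Real.cos_pi_div_four]

lemma norm_exp_exp (u : ℝ) : ‖Complex.exp (Complex.exp (pt u))‖ =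
    Real.exp (-(√2/2) * Real.exp u) := by
  rw [Complex.norm_exp, Complex.exp_re]
  simp [pt, cos_th]
  ring

lemma norm_exp_mul_pt (α u : ℝ) : ‖Complex.exp (α * pt u)‖ = Real.exp (α * u) := by
  rw [Complex.norm_exp]; simp [pt]

lemma int1 (α : ℝ) (hα : 0 < α) :
    Integrable (fun u : ℝ => Real.exp (-(√2/2) * Real.exp u) * Real.exp (α * u)) := by
  have h := (integrableOn_image_iff_integrableOn_abs_deriv_smul (s := univ) (f := Real.exp)
    (f' := Real.exp) MeasurableSet.univ (fun x _ => (Real.hasDerivAt_exp x).hasDerivWithinAt)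
    Real.exp_injective.injOn
    (fun r : ℝ => r ^ (α - 1) * Real.exp (-(√2/2) * r ^ (1:ℝ)))).1 (by
      rw [image_univ, Real.range_exp]
      exact integrableOn_rpow_mul_exp_neg_mul_rpow (by linarith) one_pos (by positivity))
  rw [integrableOn_univ] at h
  refine h.congr (Eventually.of_forall fun u => ?_)
  simp only [smul_eq_mul, abs_of_pos (Real.exp_pos u), Real.rpow_one]
  rw [← Real.exp_mul, ← mul_assoc, ← Real.exp_add, mul_comm]
  congr 2; ring

lemma int2 (α a : ℝ) :
    IntegrableOn (fun u : ℝ => Real.exp (-(√2/2) * Real.exp u) * Real.exp (α * u)) (Ioi a) := by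
  have h := ((int1 (|α| + 1) (by positivity)).integrableOn (s := Ioi a)).mul_const
    (Real.exp ((α - (|α| + 1)) * a))
  refine Integrable.mono' h (by fun_prop) ?_
  filter_upwards [ae_restrict_mem measurableSet_Ioi] with u hu
  rw [Real.norm_of_nonneg (by positivity)]
  simp only [← Real.exp_add]
  have : α ≤ |α| := le_abs_self α
  have hu : a < u := hu
  refine Real.exp_le_exp.2 ?_
  nlinarith


lemma tend_top (α : ℝ) : Tendsto (fun u : ℝ => Real.exp (-(√2/2) * Real.exp u) * Real.exp (α * u))
    atTop (𝓝 0) := by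
  have h := (tendsto_rpow_mul_exp_neg_mul_atTop_nhds_zero α (√2/2) (by positivity)).comp
    Real.tendsto_exp_atTop
  refine h.congr fun u => ?_
  simp only [Function.comp]
  rw [← Real.exp_mul, mul_comm, mul_comm u]

lemma tend_bot (α : ℝ) (hα : 0 < α) :
    Tendsto (fun u : ℝ => Real.exp (-(√2/2) * Real.exp u) * Real.exp (α * u))
    atBot (𝓝 0) := by
  have h : Tendsto (fun u : ℝ => Real.exp (α * u)) atBot (𝓝 0) :=
    Real.tendsto_exp_atBot.comp (tendsto_id.const_mul_atBot hα)
  refine squeeze_zero (fun u => by positivity) (fun u => ?_) h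
  have : Real.exp (-(√2/2) * Real.exp u) ≤ 1 := by
    rw [Real.exp_le_one_iff]
    have : 0 < √2/2 * Real.exp u := by positivity
    linarith
  exact mul_le_of_le_one_left (Real.exp_pos _).le this

lemma side_bound (α u v : ℝ) (hv : v ∈ Icc th π) :
    ‖Complex.exp (Complex.exp ((u : ℂ) + v * Complex.I)) * Complex.exp (α * ((u : ℂ) + v * Complex.I))‖
      ≤ Real.exp (-(√2/2) * Real.exp u) * Real.exp (α * u) := by
  rw [norm_mul, Complex.norm_exp, Complex.norm_exp, Complex.exp_re]
  have h : Real.cos v ≤ -(√2/2) := by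
    rw [← cos_th]
    exact Real.cos_le_cos_of_nonneg_of_le_pi th_pos.le hv.2 hv.1
  have e : (α * ((u : ℂ) + v * Complex.I)).re = α * u := by simp
  have e2 : ((u : ℂ) + v * Complex.I).re = u := by simp
  have e3 : ((u : ℂ) + v * Complex.I).im = v := by simp
  rw [e, e2, e3]
  refine mul_le_mul_of_nonneg_right (Real.exp_le_exp.2 ?_) (Real.exp_pos _).le
  nlinarith [Real.exp_pos u]

lemma form2 (α : ℝ) (hα : 0 < α) :
    ∫ u : ℝ, (Complex.exp (Complex.exp (pt u)) * Complex.exp (α * pt u)).im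
      = Real.sin (π * α) * Real.Gamma α := by
  set g : ℂ → ℂ := fun w => Complex.exp (Complex.exp w) * Complex.exp (α * w) with hg
  have hthpi : th ≤ π := by unfold th; linarith [Real.pi_pos]
  have hgd : Differentiable ℂ g := by rw [hg]; fun_prop
  have hgc : Continuous g := hgd.continuous
  have hint : ∀ v ∈ Icc th π, Integrable (fun u : ℝ => g ((u : ℂ) + v * Complex.I)) := by
    intro v hv
    refine (int1 α hα).mono' ?_ (Eventually.of_forall fun u => side_bound α u v hv)
    exact (hgc.comp (by fun_prop)).aestronglyMeasurable
  have hth := hint th ⟨le_rfl, hthpi⟩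
  have hpi := hint π ⟨hthpi, le_rfl⟩
  have him := integral_im (𝕜 := ℂ) hth
  simp only [RCLike.im_to_complex] at him
  change ∫ u : ℝ, (g ((u : ℂ) + th * Complex.I)).im = _
  rw [him]
  have hrect : ∀ N : ℝ, (((∫ x : ℝ in (-N)..N, g (x + th * Complex.I)) -
      ∫ x : ℝ in (-N)..N, g (x + π * Complex.I)) +
      Complex.I • ∫ y : ℝ in th..π, g ((N : ℂ) + y * Complex.I)) -
      Complex.I • ∫ y : ℝ in th..π, g (((-N : ℝ) : ℂ) + y * Complex.I) = 0 := by
    intro N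
    have := Complex.integral_boundary_rect_eq_zero_of_differentiableOn g
      (((-N : ℝ) : ℂ) + th * Complex.I) ((N : ℂ) + π * Complex.I) hgd.differentiableOn
    simpa using this
  have hside : ∀ l : Filter ℝ, ∀ m : ℝ → ℝ,
      Tendsto (fun u : ℝ => Real.exp (-(√2/2) * Real.exp (m u)) * Real.exp (α * m u)) l (𝓝 0) →
      Tendsto (fun N : ℝ => ∫ y : ℝ in th..π, g ((m N : ℂ) + y * Complex.I)) l (𝓝 0) := by
    intro l m hm
    refine squeeze_zero_norm (a := fun N => (Real.exp (-(√2/2) * Real.exp (m N)) * Real.exp (α * m N)) * |π - th|) ?_ (by simpa using hm.mul_const |π - th|)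
    intro N
    refine intervalIntegral.norm_integral_le_of_norm_le_const ?_
    intro y hy
    rw [uIoc_of_le hthpi] at hy
    exact side_bound α (m N) y ⟨hy.1.le, hy.2⟩
  have h1 := hside atTop (fun N => N) (tend_top α)
  have h2 := hside atTop (fun N => -N) ((tend_bot α hα).comp tendsto_neg_atTop_atBot)
  have h3 := intervalIntegral_tendsto_integral hth tendsto_neg_atTop_atBot tendsto_id
  have h4 := intervalIntegral_tendsto_integral hpi tendsto_neg_atTop_atBot tendsto_id
  have h5 := ((h3.sub h4).add (h1.const_smul Complex.I)).sub (h2.const_smul Complex.I)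
  have h6 := tendsto_nhds_unique (h5.congr hrect) tendsto_const_nhds
  simp only [smul_zero, add_zero, sub_zero] at h6
  rw [sub_eq_zero.1 h6]
  have h := integral_image_eq_integral_abs_deriv_smul (s := univ) (f := Real.exp)
    (f' := Real.exp) MeasurableSet.univ (fun x _ => (Real.hasDerivAt_exp x).hasDerivWithinAt)
    Real.exp_injective.injOn
    (fun r : ℝ => Real.exp (-r) * r ^ (α - 1))
  rw [image_univ, Real.range_exp, ← Real.Gamma_eq_integral hα, setIntegral_univ] at h
  have hfun : ∀ u : ℝ, g ((u : ℂ) + π * Complex.I) = Complex.exp ((π * α : ℝ) * Complex.I) *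
     ((|Real.exp u| • (Real.exp (-Real.exp u) * Real.exp u ^ (α - 1)) : ℝ) : ℂ) := by
    intro u
    have e1 : |Real.exp u| • (Real.exp (-Real.exp u) * Real.exp u ^ (α - 1)) =
        Real.exp (-Real.exp u) * Real.exp (α * u) := by
      rw [abs_of_pos (Real.exp_pos u), smul_eq_mul, ← Real.exp_mul, mul_left_comm, ← Real.exp_add]
      congr 2; ring
    rw [e1, hg]
    simp only
    rw [Complex.exp_add (u : ℂ), Complex.exp_pi_mul_I, mul_add, Complex.exp_add (α * u : ℂ)]
    push_cast
    ring_nf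
  simp_rw [hfun]
  rw [integral_const_mul, integral_complex_ofReal, ← h, Complex.im_mul_ofReal, Complex.exp_ofReal_mul_I_im]


noncomputable def V (g : ℂ → ℂ) (a : ℝ) : ℝ :=
  (∫ u in Ioi a, (g (pt u)).im) + ∫ v in (0:ℝ)..th, (g ((a : ℂ) + v * Complex.I)).re

lemma V_shift (g : ℂ → ℂ) (hd : ∀ w : ℂ, 0 ≤ w.im → w.im ≤ th → DifferentiableAt ℂ g w)
    (hr : ∀ x : ℝ, (g x).im = 0) (a b : ℝ) (hab : a ≤ b)
    (hi : IntegrableOn (fun u => (g (pt u)).im) (Ioi a)) : V g a = V g b := by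
  have hthp := th_pos
  have hcv : ∀ c : ℝ, IntervalIntegrable (fun y : ℝ => g ((c : ℂ) + y * Complex.I)) volume 0 th := by
    intro c
    apply ContinuousOn.intervalIntegrable
    intro y hy
    rw [uIcc_of_le hthp.le] at hy
    have h1 : ContinuousAt g ((c : ℂ) + y * Complex.I) :=
      (hd _ (by simpa using hy.1) (by simpa using hy.2)).continuousAt
    exact (ContinuousAt.comp (f := fun y : ℝ => (c : ℂ) + y * Complex.I) h1
      (by fun_prop)).continuousWithinAt
  have hch : ∀ v ∈ Icc 0 th,
      IntervalIntegrable (fun x : ℝ => g ((x : ℂ) + v * Complex.I)) volume a b := by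
    intro v hv
    apply Continuous.intervalIntegrable
    rw [continuous_iff_continuousAt]
    intro x
    have h1 : ContinuousAt g ((x : ℂ) + v * Complex.I) :=
      (hd _ (by simpa using hv.1) (by simpa using hv.2)).continuousAt
    exact (ContinuousAt.comp (f := fun x : ℝ => (x : ℂ) + v * Complex.I) h1 (by fun_prop))
  have h := Complex.integral_boundary_rect_eq_zero_of_differentiableOn g
    ((a : ℂ) + (0:ℝ) * Complex.I) ((b : ℂ) + th * Complex.I) (by
      intro w hw
      rw [Complex.mem_reProdIm] at hw
      have := hw.2
      simp [uIcc_of_le hthp.le] at this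
      exact (hd w this.1 this.2).differentiableWithinAt)
  have h := congrArg Complex.im h
  simp only [Complex.sub_im, Complex.add_im, smul_eq_mul, Complex.I_mul_im, Complex.zero_im] at h
  simp only [Complex.add_re, Complex.ofReal_re, Complex.mul_re, Complex.I_re, mul_zero, Complex.ofReal_im,
    Complex.I_im, mul_one, sub_zero, add_zero, Complex.add_im, Complex.mul_im, zero_add, sub_self] at h
  have him : ∀ v ∈ Icc 0 th, (∫ x : ℝ in a..b, g ((x : ℂ) + v * Complex.I)).im =
      ∫ x : ℝ in a..b, (g ((x : ℂ) + v * Complex.I)).im := fun v hv =>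
    (intervalIntegral.intervalIntegral_im (𝕜 := ℂ) (hch v hv)).symm
  have hre : ∀ c : ℝ, (∫ y : ℝ in (0:ℝ)..th, g ((c : ℂ) + y * Complex.I)).re =
      ∫ y : ℝ in (0:ℝ)..th, (g ((c : ℂ) + y * Complex.I)).re := fun c =>
    (intervalIntegral.intervalIntegral_re (𝕜 := ℂ) (hcv c)).symm
  rw [him 0 ⟨le_rfl, hthp.le⟩, him th ⟨hthp.le, le_rfl⟩, hre, hre] at h
  have h0 : ∫ x : ℝ in a..b, (g ((x : ℂ) + (0:ℝ) * Complex.I)).im = 0 := by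
    simp [hr]
  rw [h0] at h
  have h7 := intervalIntegral.integral_Ioi_sub_Ioi hi hab
  unfold V
  unfold pt at *
  linarith

lemma V_lim (g : ℂ → ℂ) (hd : ∀ w : ℂ, 0 ≤ w.im → w.im ≤ th → DifferentiableAt ℂ g w)
    (hr : ∀ x : ℝ, (g x).im = 0) (a : ℝ) (C α : ℝ) (hα : 0 < α)
    (hb : ∀ c : ℝ, c ≤ 0 → ∀ v ∈ Icc 0 th, ‖g ((c : ℂ) + v * Complex.I)‖ ≤ C * Real.exp (α * c))
    (hi : Integrable (fun u => (g (pt u)).im)) : V g a = ∫ u, (g (pt u)).im := by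
  have h1 : Tendsto (fun c => ∫ u in Ioi c, (g (pt u)).im) atBot (𝓝 (∫ u, (g (pt u)).im)) :=
    (aecover_Ioi tendsto_id).integral_tendsto_of_countably_generated hi
  have h2 : Tendsto (fun c : ℝ => ∫ v in (0:ℝ)..th, (g ((c : ℂ) + v * Complex.I)).re) atBot (𝓝 0) := by
    have h3 : Tendsto (fun u : ℝ => C * Real.exp (α * u) * |th - 0|) atBot (𝓝 0) := by
      have h : Tendsto (fun u : ℝ => Real.exp (α * u)) atBot (𝓝 0) :=
        Real.tendsto_exp_atBot.comp (tendsto_id.const_mul_atBot hα)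
      simpa using (h.const_mul C).mul_const |th - 0|
    refine squeeze_zero_norm' ?_ h3
    filter_upwards [eventually_le_atBot 0] with c hc
    refine intervalIntegral.norm_integral_le_of_norm_le_const ?_
    intro y hy
    rw [uIoc_of_le th_pos.le] at hy
    exact (Complex.abs_re_le_norm _).trans (hb c hc y ⟨hy.1.le, hy.2⟩)
  have h4 := h1.add h2
  rw [add_zero] at h4
  refine tendsto_nhds_unique (f := fun _ : ℝ => V g a) (l := atBot) tendsto_const_nhds (h4.congr' ?_)
  filter_upwards [eventually_le_atBot a] with c hc
  exact V_shift g hd hr c a hc hi.integrableOn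

/-- the Hankel kernel -/
noncomputable def hk (β : ℝ) (w : ℂ) : ℂ := Complex.exp (Complex.exp w) * Complex.exp (-(β : ℂ) * w)

lemma hk_diff (β : ℝ) : Differentiable ℂ (hk β) := by unfold hk; fun_prop

lemma hk_real (β x : ℝ) : (hk β x).im = 0 := by
  have : hk β x = ((Real.exp (Real.exp x) * Real.exp (-β * x) : ℝ) : ℂ) := by
    unfold hk; push_cast; rfl
  rw [this, Complex.ofReal_im]

lemma hk_norm (β u : ℝ) : ‖hk β (pt u)‖ = Real.exp (-(√2/2) * Real.exp u) * Real.exp (-β * u) := by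
  unfold hk
  rw [norm_mul, norm_exp_exp, ← norm_exp_mul_pt (-β)]
  push_cast; rfl

lemma pt_cont : Continuous pt := by unfold pt; fun_prop

lemma hk_meas (β : ℝ) : Continuous (fun u => hk β (pt u)) :=
  (hk_diff β).continuous.comp pt_cont

lemma hk_int (β a : ℝ) : IntegrableOn (fun u => hk β (pt u)) (Ioi a) := by
  refine (int2 (-β) a).mono' (hk_meas β).aestronglyMeasurable (Eventually.of_forall fun u => ?_)
  rw [hk_norm]

lemma hk_int_im (β a : ℝ) : IntegrableOn (fun u => (hk β (pt u)).im) (Ioi a) := (hk_int β a).im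

lemma V_hk_neg (β : ℝ) (hβ : β < 0) (a : ℝ) : V (hk β) a = π / Real.Gamma (β + 1) := by
  have hint : Integrable (fun u => hk β (pt u)) := by
    refine (int1 (-β) (by linarith)).mono' (hk_meas β).aestronglyMeasurable
      (Eventually.of_forall fun u => ?_)
    rw [hk_norm]
  rw [V_lim (hk β) (fun w _ _ => hk_diff β w) (hk_real β) a (Real.exp 1) (-β) (by linarith) ?_ hint.im]
  · have := form2 (-β) (by linarith)
    unfold hk
    push_cast at this
    rw [this]
    have hr := Real.Gamma_mul_Gamma_one_sub (-β)
    rw [show 1 - -β = β + 1 by ring] at hr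
    rw [mul_comm π]
    have e : Real.Gamma (-β) > 0 := Real.Gamma_pos_of_pos (by linarith)
    rw [mul_comm π] at hr
    generalize Real.sin (-β * π) = S at *
    by_cases hs : S = 0
    · rw [hs, div_zero] at hr
      have : Real.Gamma (β + 1) = 0 := by
        rcases mul_eq_zero.1 hr with h | h
        · exact absurd h e.ne'
        · exact h
      rw [hs, this]; simp
    · have : Real.Gamma (β + 1) ≠ 0 := by
        intro h0
        rw [h0, mul_zero, eq_comm, div_eq_zero_iff] at hr
        rcases hr with h | h
        · exact Real.pi_ne_zero h
        · exact hs h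
      rw [eq_div_iff hs] at hr
      rw [eq_div_iff this]
      linarith
  · intro c hc v hv
    unfold hk
    rw [norm_mul, Complex.norm_exp, Complex.norm_exp]
    have e1 : (-(β : ℂ) * ((c : ℂ) + v * Complex.I)).re = -β * c := by simp
    rw [e1]
    refine mul_le_mul_of_nonneg_right (Real.exp_le_exp.2 ?_) (Real.exp_pos _).le
    refine (Complex.re_le_norm _).trans ?_
    rw [Complex.norm_exp]
    simpa using hc

lemma V_hk_rec (β a : ℝ) : V (hk (β - 1)) a = β * V (hk β) a := by
  have hder : ∀ w : ℂ, HasDerivAt (hk β) (hk (β - 1) w - β * hk β w) w := by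
    intro w
    unfold hk
    have h1 := ((Complex.hasDerivAt_exp w).cexp).mul
      (((hasDerivAt_id w).const_mul (-(β : ℂ))).cexp)
    refine h1.congr_deriv ?_
    have : Complex.exp (-((β - 1 : ℝ) : ℂ) * w) = Complex.exp w * Complex.exp (-(β : ℂ) * w) := by
      rw [← Complex.exp_add]; congr 1; push_cast; ring
    rw [this]
    simp
    ring
  have hv : (∫ v in (0:ℝ)..th, (hk (β - 1) ((a : ℂ) + v * Complex.I) -
      β * hk β ((a : ℂ) + v * Complex.I)) * Complex.I) = hk β (a + th * Complex.I) - hk β a := by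
    have := intervalIntegral.integral_eq_sub_of_hasDerivAt (a := 0) (b := th)
      (f := fun v : ℝ => hk β ((a : ℂ) + v * Complex.I)) (f' := fun v : ℝ =>
       (hk (β - 1) ((a : ℂ) + v * Complex.I) - β * hk β ((a : ℂ) + v * Complex.I)) * Complex.I) ?_ ?_
    · simpa using this
    · intro v _
      have h2 : HasDerivAt (fun v : ℝ => (a : ℂ) + v * Complex.I) Complex.I v := by
        simpa using ((Complex.ofRealCLM.hasDerivAt (x := v)).mul_const Complex.I).const_add (a : ℂ)
      exact (hder _).comp v h2
    · apply Continuous.intervalIntegrable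
      have h1 := (hk_diff β).continuous
      have h2 := (hk_diff (β - 1)).continuous
      fun_prop
  have hh : (∫ u in Ioi a, (hk (β - 1) (pt u) - β * hk β (pt u))) = 0 - hk β (pt a) := by
    refine integral_Ioi_of_hasDerivAt_of_tendsto (f := fun u : ℝ => hk β (pt u)) ?_ ?_ ?_ ?_
    · exact (hk_meas β).continuousWithinAt
    · intro u _
      have h2 : HasDerivAt pt 1 u := by
        unfold pt
        simpa using (Complex.ofRealCLM.hasDerivAt (x := u)).add_const ((th : ℂ) * Complex.I)
      have h3 := (hder (pt u)).comp u h2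
      rw [mul_one] at h3
      exact h3
    · exact (hk_int _ a).sub ((hk_int _ a).const_mul _)
    · rw [tendsto_zero_iff_norm_tendsto_zero]
      simp_rw [hk_norm]
      exact tend_top (-β)
  have e1 := congrArg Complex.im hv
  have e2 := congrArg Complex.im hh
  have i1 : ∀ β : ℝ, IntervalIntegrable (fun v : ℝ => (hk β ((a : ℂ) + v * Complex.I)).re) volume 0 th := by
    intro β
    apply Continuous.intervalIntegrable
    have h1 := (hk_diff β).continuous
    fun_prop
  have r1 := (intervalIntegral.intervalIntegral_im (𝕜 := ℂ) (a := 0) (b := th) (μ := volume)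
    (f := fun v : ℝ => (hk (β - 1) ((a : ℂ) + v * Complex.I) - β * hk β ((a : ℂ) + v * Complex.I)) * Complex.I) (by
      apply Continuous.intervalIntegrable
      have h1 := (hk_diff β).continuous
      have h2 := (hk_diff (β - 1)).continuous
      fun_prop))
  have r2 := (integral_im (𝕜 := ℂ) ((hk_int (β-1) a).sub ((hk_int β a).const_mul (β : ℂ))))
  simp only [RCLike.im_to_complex, Pi.sub_apply] at r1 r2
  rw [← r1] at e1
  rw [← r2] at e2
  simp only [Complex.mul_I_im, Complex.sub_re, Complex.sub_im, Complex.re_ofReal_mul, Complex.im_ofReal_mul,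
    Complex.zero_im] at e1 e2
  rw [intervalIntegral.integral_sub (i1 _) ((i1 _).const_mul _), intervalIntegral.integral_const_mul,
    hk_real] at e1
  rw [integral_sub (hk_int_im _ a) ((hk_int_im _ a).const_mul _), integral_const_mul] at e2
  unfold V
  unfold pt at *
  linarith

lemma V_hk_zero : V (hk 0) 0 = π := by
  have hc : ContinuousAt (fun β => V (hk β) 0) 0 := by
    unfold V
    refine ContinuousAt.add ?_ ?_
    · refine continuousAt_of_dominated (bound := fun u => Real.exp (-(√2/2) * Real.exp u) * Real.exp (1 * u)) ?_ ?_ (int2 1 0) ?_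
      · exact Eventually.of_forall fun β => (Complex.continuous_im.comp (hk_meas β)).aestronglyMeasurable
      · filter_upwards [Ioi_mem_nhds (show (-1:ℝ) < 0 by norm_num)] with β hβ
        filter_upwards [ae_restrict_mem measurableSet_Ioi] with u hu
        refine (Complex.abs_im_le_norm _).trans ?_
        rw [hk_norm]
        refine mul_le_mul_of_nonneg_left (Real.exp_le_exp.2 ?_) (Real.exp_pos _).le
        have hβ : -1 < β := hβ
        have hu : 0 < u := hu
        nlinarith
      · refine Eventually.of_forall fun u => Continuous.continuousAt ?_
        unfold hk; fun_prop
    · refine Continuous.continuousAt ?_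
      apply intervalIntegral.continuous_parametric_intervalIntegral_of_continuous'
      unfold hk Function.uncurry; fun_prop
  have hg : ContinuousAt (fun β : ℝ => π / Real.Gamma (β + 1)) 0 := by
    have h1 : ContinuousAt Real.Gamma (0 + 1) := by
      apply (Real.differentiableAt_Gamma _).continuousAt
      intro m h
      have : (0:ℝ) ≤ m := m.cast_nonneg
      linarith
    have h2 : ContinuousAt (fun β : ℝ => Real.Gamma (β + 1)) 0 :=
      ContinuousAt.comp (f := fun β : ℝ => β + 1) h1 (by fun_prop)
    exact continuousAt_const.div h2 (by simp)
  have h1 : Tendsto (fun β => V (hk β) 0) (𝓝[<] 0) (𝓝 (V (hk 0) 0)) := hc.tendsto.mono_left nhdsWithin_le_nhds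
  have h2 : Tendsto (fun β : ℝ => π / Real.Gamma (β + 1)) (𝓝[<] 0) (𝓝 (π / Real.Gamma (0 + 1))) :=
    hg.tendsto.mono_left nhdsWithin_le_nhds
  have h3 := tendsto_nhds_unique (h1.congr' (by
    filter_upwards [self_mem_nhdsWithin] with β hβ
    exact V_hk_neg β hβ 0)) h2
  simpa using h3

lemma V_hk (β a : ℝ) : V (hk β) a = π / Real.Gamma (β + 1) := by
  obtain ⟨n, hn⟩ := exists_nat_gt β
  induction n generalizing β with
  | zero => exact V_hk_neg β (by simpa using hn) a
  | succ n ih =>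
    by_cases h0 : β = 0
    · subst h0
      have h1 : V (hk 0) a = V (hk 0) 0 := by
        rcases le_total a 0 with h | h
        · exact V_shift _ (fun w _ _ => hk_diff 0 w) (hk_real 0) _ _ h (hk_int 0 a).im
        · exact (V_shift _ (fun w _ _ => hk_diff 0 w) (hk_real 0) _ _ h (hk_int 0 0).im).symm
      rw [h1, V_hk_zero]; simp
    · have h1 := ih (β - 1) (by push_cast at hn; linarith)
      rw [V_hk_rec, sub_add_cancel] at h1
      rw [Real.Gamma_add_one h0]
      field_simp
      field_simp at h1
      rw [mul_comm]; exact h1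



noncomputable def gk (ρ x : ℝ) (w : ℂ) : ℂ :=
  Complex.exp (Complex.exp w) * (Complex.exp (ρ * w) / (Complex.exp (ρ * w) + x))

lemma den_bound (ρ x : ℝ) (hρ : 0 < ρ) (hρ1 : ρ ≤ 1) (hx : 0 < x) (w : ℂ) (h0 : 0 ≤ w.im)
    (h1 : w.im ≤ th) : x / 2 ≤ ‖Complex.exp (ρ * w) + x‖ ∧
      Real.exp (ρ * w.re) / 2 ≤ ‖Complex.exp (ρ * w) + x‖ := by
  have hc : -(√2 / 2) ≤ Real.cos (ρ * w.im) := by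
    rw [← cos_th]
    refine Real.cos_le_cos_of_nonneg_of_le_pi (by positivity) ?_ ?_
    · unfold th; linarith [Real.pi_pos]
    · nlinarith
  set r := Real.exp (ρ * w.re) with hr
  have hrp : 0 < r := Real.exp_pos _
  have hre : (Complex.exp (ρ * w)).re = r * Real.cos (ρ * w.im) := by
    rw [Complex.exp_re]; simp [hr]
  have him : (Complex.exp (ρ * w)).im = r * Real.sin (ρ * w.im) := by
    rw [Complex.exp_im]; simp [hr]
  have hn : ‖Complex.exp (ρ * w) + x‖ ^ 2 = r ^ 2 + 2 * r * x * Real.cos (ρ * w.im) + x ^ 2 := by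
    rw [Complex.sq_norm, Complex.normSq_apply]
    simp only [Complex.add_re, Complex.add_im, Complex.ofReal_re, Complex.ofReal_im, hre, him]
    nlinarith [Real.sin_sq_add_cos_sq (ρ * w.im)]
  have hs : √2 ^ 2 = 2 := Real.sq_sqrt (by norm_num)
  have h2 : r ^ 2 - √2 * r * x + x ^ 2 ≤ ‖Complex.exp (ρ * w) + x‖ ^ 2 := by
    rw [hn]; nlinarith [mul_pos hrp hx]
  constructor
  · refine le_of_sq_le_sq ?_ (norm_nonneg _)
    nlinarith [sq_nonneg (r - √2 / 2 * x), sq_nonneg x]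
  · refine le_of_sq_le_sq ?_ (norm_nonneg _)
    nlinarith [sq_nonneg (x - √2 / 2 * r), sq_nonneg r]

lemma den_ne (ρ x : ℝ) (hρ : 0 < ρ) (hρ1 : ρ ≤ 1) (hx : 0 < x) (w : ℂ) (h0 : 0 ≤ w.im)
    (h1 : w.im ≤ th) : Complex.exp (ρ * w) + x ≠ 0 := by
  have := (den_bound ρ x hρ hρ1 hx w h0 h1).1
  rw [← norm_pos_iff]; linarith

lemma gk_diff (ρ x : ℝ) (hρ : 0 < ρ) (hρ1 : ρ ≤ 1) (hx : 0 < x) (w : ℂ) (h0 : 0 ≤ w.im)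
    (h1 : w.im ≤ th) : DifferentiableAt ℂ (gk ρ x) w := by
  unfold gk
  have := den_ne ρ x hρ hρ1 hx w h0 h1
  fun_prop (disch := assumption)

lemma pt_re (u : ℝ) : (pt u).re = u := by simp [pt]
lemma pt_im (u : ℝ) : (pt u).im = th := by simp [pt]

lemma gk_cont (ρ x : ℝ) (hρ : 0 < ρ) (hρ1 : ρ ≤ 1) (hx : 0 < x) : Continuous (fun u => gk ρ x (pt u)) := by
  rw [continuous_iff_continuousAt]
  intro u
  exact ContinuousAt.comp (f := pt) (gk_diff ρ x hρ hρ1 hx (pt u) (by rw [pt_im]; exact th_pos.le)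
    (by rw [pt_im])).continuousAt pt_cont.continuousAt

lemma frac_bound (ρ x : ℝ) (hρ : 0 < ρ) (hρ1 : ρ ≤ 1) (hx : 0 < x) (w : ℂ) (h0 : 0 ≤ w.im)
    (h1 : w.im ≤ th) : ‖Complex.exp (ρ * w) / (Complex.exp (ρ * w) + x)‖ ≤
      2 / x * Real.exp (ρ * w.re) := by
  have h := (den_bound ρ x hρ hρ1 hx w h0 h1).1
  have e1 : ‖Complex.exp (ρ * w)‖ = Real.exp (ρ * w.re) := by
    rw [Complex.norm_exp]; simp
  rw [norm_div, e1, div_le_iff₀ (by linarith)]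
  have h3 : Real.exp (ρ * w.re) = 2 / x * Real.exp (ρ * w.re) * (x / 2) := by field_simp
  refine h3.le.trans ?_
  gcongr

lemma gk_int (ρ x : ℝ) (hρ : 0 < ρ) (hρ1 : ρ ≤ 1) (hx : 0 < x) : Integrable (fun u => gk ρ x (pt u)) := by
  refine ((int1 ρ hρ).const_mul (2 / x)).mono' (gk_cont ρ x hρ hρ1 hx).aestronglyMeasurable
    (Eventually.of_forall fun u => ?_)
  unfold gk
  rw [norm_mul, norm_exp_exp]
  have := frac_bound ρ x hρ hρ1 hx (pt u) (by rw [pt_im]; exact th_pos.le) (by rw [pt_im])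
  rw [pt_re] at this
  calc _ ≤ Real.exp (-(√2/2) * Real.exp u) * (2 / x * Real.exp (ρ * u)) := by gcongr
    _ = _ := by ring

lemma gk_real (ρ x y : ℝ) : (gk ρ x y).im = 0 := by
  have : gk ρ x y = ((Real.exp (Real.exp y) * (Real.exp (ρ * y) / (Real.exp (ρ * y) + x)) : ℝ) : ℂ) := by
    unfold gk; push_cast; rfl
  rw [this, Complex.ofReal_im]

lemma V_gk (ρ x : ℝ) (hρ : 0 < ρ) (hρ1 : ρ ≤ 1) (hx : 0 < x) (a : ℝ) :
    V (gk ρ x) a = ∫ u, (gk ρ x (pt u)).im := by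
  refine V_lim (gk ρ x) (gk_diff ρ x hρ hρ1 hx) (gk_real ρ x) a (Real.exp 1 * (2 / x)) ρ hρ ?_
    (gk_int ρ x hρ hρ1 hx).im
  intro c hc v hv
  unfold gk
  have := frac_bound ρ x hρ hρ1 hx ((c : ℂ) + v * Complex.I) (by simpa using hv.1) (by simpa using hv.2)
  rw [show ((c : ℂ) + v * Complex.I).re = c by simp] at this
  rw [norm_mul, mul_assoc]
  refine mul_le_mul ?_ this (norm_nonneg _) (Real.exp_pos _).le
  rw [Complex.norm_exp]
  refine Real.exp_le_exp.2 ((Complex.re_le_norm _).trans ?_)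
  rw [Complex.norm_exp]
  simpa using hc

lemma hk_term_norm (ρ x : ℝ) (hx : 0 < x) (k : ℕ) (w : ℂ) :
    ‖((-x) ^ k : ℝ) * hk (ρ * k) w‖ = ‖Complex.exp (Complex.exp w)‖ * (x * Real.exp (-(ρ * w.re))) ^ k := by
  unfold hk
  rw [norm_mul, norm_mul, Complex.norm_exp (-((ρ * k : ℝ) : ℂ) * w), Complex.norm_real, norm_pow, norm_neg,
    Real.norm_of_nonneg hx.le, mul_pow, ← Real.exp_nat_mul]
  have : (-((ρ * k : ℝ) : ℂ) * w).re = k * (-(ρ * w.re)) := by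
    rw [← Complex.ofReal_neg, Complex.re_ofReal_mul]; ring
  rw [this]; ring

lemma hk_hasSum (ρ x : ℝ) (hx : 0 < x) (w : ℂ) (h : x * Real.exp (-(ρ * w.re)) < 1) :
    HasSum (fun k : ℕ => ((-x) ^ k : ℝ) * hk (ρ * k) w) (gk ρ x w) := by
  have hn : ‖-(x : ℂ) * Complex.exp (-(ρ * w))‖ < 1 := by
    rw [norm_mul, norm_neg, Complex.norm_real, Real.norm_of_nonneg hx.le, Complex.norm_exp]
    simpa using h
  have hs := (hasSum_geometric_of_norm_lt_one hn).mul_left (Complex.exp (Complex.exp w))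
  have e3 : (fun k : ℕ => ((-x) ^ k : ℝ) * hk (ρ * k) w) =
      fun k : ℕ => Complex.exp (Complex.exp w) * (-(x : ℂ) * Complex.exp (-(ρ * w))) ^ k := by
    funext k
    unfold hk
    rw [mul_pow, ← Complex.exp_nat_mul]
    push_cast
    rw [show (k : ℂ) * -(ρ * w) = -(ρ * k) * w by ring]
    ring
  have e4 : gk ρ x w = Complex.exp (Complex.exp w) * (1 - -(x : ℂ) * Complex.exp (-(ρ * w)))⁻¹ := by
    unfold gk
    congr 1
    have hne : 1 - -(x : ℂ) * Complex.exp (-(ρ * w)) ≠ 0 := by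
      intro h0
      rw [sub_eq_zero] at h0
      rw [← h0] at hn
      simp at hn
    have he : Complex.exp (ρ * w) * Complex.exp (-(ρ * w)) = 1 := by
      rw [← Complex.exp_add]; simp
    have e2 : Complex.exp (ρ * w) + x = Complex.exp (ρ * w) * (1 - -(x : ℂ) * Complex.exp (-(ρ * w))) := by
      linear_combination (-(x : ℂ)) * he
    rw [e2, div_mul_eq_div_div, div_self (Complex.exp_ne_zero _), one_div]
  rw [e3, e4]
  exact hs

lemma V_gk_sum (ρ x : ℝ) (hρ : 0 < ρ) (hx : 0 < x) (a : ℝ) (ha : x * Real.exp (-(ρ * a)) < 1) :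
    HasSum (fun k : ℕ => (-x) ^ k * V (hk (ρ * k)) a) (V (gk ρ x) a) := by
  set q := x * Real.exp (-(ρ * a)) with hq
  have hq0 : 0 ≤ q := by positivity
  have hsum := summable_geometric_of_lt_one hq0 ha
  have hle : ∀ u, a ≤ u → x * Real.exp (-(ρ * u)) ≤ q := by
    intro u hu
    rw [hq]; gcongr
  have H1 : HasSum (fun k : ℕ => ∫ u in Ioi a, (((-x) ^ k : ℝ) * hk (ρ * k) (pt u)).im)
      (∫ u in Ioi a, (gk ρ x (pt u)).im) := by
    refine hasSum_integral_of_dominated_convergence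
      (fun k u => (Real.exp (-(√2/2) * Real.exp u) * Real.exp (0 * u)) * q ^ k) ?_ ?_ ?_ ?_ ?_
    · intro k
      exact (Complex.continuous_im.comp
        (continuous_const.mul (hk_meas (ρ * k)))).aestronglyMeasurable
    · intro k
      filter_upwards [ae_restrict_mem measurableSet_Ioi] with u hu
      refine (Complex.abs_im_le_norm _).trans ?_
      rw [hk_term_norm ρ x hx, norm_exp_exp, pt_re, zero_mul, Real.exp_zero, mul_one]
      have := hle u (le_of_lt hu)
      gcongr
    · exact Eventually.of_forall fun u => hsum.mul_left _
    · simp_rw [tsum_mul_left]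
      exact (int2 0 a).mul_const _
    · filter_upwards [ae_restrict_mem measurableSet_Ioi] with u hu
      refine Complex.hasSum_im (hk_hasSum ρ x hx (pt u) ?_)
      rw [pt_re]
      exact (hle u (le_of_lt hu)).trans_lt ha
  have H2 : HasSum (fun k : ℕ => ∫ v in (0:ℝ)..th, (((-x) ^ k : ℝ) * hk (ρ * k) ((a : ℂ) + v * Complex.I)).re)
      (∫ v in (0:ℝ)..th, (gk ρ x ((a : ℂ) + v * Complex.I)).re) := by
    refine intervalIntegral.hasSum_integral_of_dominated_convergence
      (fun k v => Real.exp (Real.exp a) * q ^ k) ?_ ?_ ?_ ?_ ?_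
    · intro k
      have := (hk_diff (ρ * k)).continuous
      exact Continuous.aestronglyMeasurable (by fun_prop)
    · intro k
      refine Eventually.of_forall fun v _ => ?_
      refine (Complex.abs_re_le_norm _).trans ?_
      rw [hk_term_norm ρ x hx]
      have e : ((a : ℂ) + v * Complex.I).re = a := by simp
      rw [e, ← hq]
      gcongr
      rw [Complex.norm_exp]
      refine Real.exp_le_exp.2 ((Complex.re_le_norm _).trans ?_)
      rw [Complex.norm_exp, e]
    · exact Eventually.of_forall fun u _ => hsum.mul_left _
    · simp
    · refine Eventually.of_forall fun v _ => ?_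
      refine Complex.hasSum_re (hk_hasSum ρ x hx _ ?_)
      simpa using ha
  have H := H1.add H2
  unfold V
  convert H using 1
  ext k
  simp only [Complex.im_ofReal_mul, Complex.re_ofReal_mul]
  rw [integral_const_mul, intervalIntegral.integral_const_mul]
  ring

/-- Integral representation of the Mittag-Leffler function. -/
lemma ml_rep (ρ x : ℝ) (hρ : 0 < ρ) (hρ1 : ρ ≤ 1) (hx : 0 < x) :
    π * mittagLeffler ρ (-x) = ∫ u, (gk ρ x (pt u)).im := by
  obtain ⟨a, ha⟩ : ∃ a : ℝ, x * Real.exp (-(ρ * a)) < 1 := by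
    refine ⟨(Real.log x + 1) / ρ, ?_⟩
    rw [mul_div_cancel₀ _ hρ.ne', neg_add, Real.exp_add, Real.exp_neg, Real.exp_log hx, ← mul_assoc,
      mul_inv_cancel₀ hx.ne', one_mul]
    simp
  have h := V_gk_sum ρ x hρ hx a ha
  rw [V_gk ρ x hρ hρ1 hx] at h
  rw [← h.tsum_eq, mittagLeffler, ← tsum_mul_left]
  congr 1
  ext k
  rw [V_hk]; ring


lemma gamma_low (y : ℝ) (h0 : 0 ≤ y) (h1 : y < 1) : (1 - y) / 2 ≤ Real.Gamma (1 + y) - y := by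
  have hd : HasDerivAt Real.Gamma (1 - eulerMascheroniConstant) 2 := by
    have h := Real.deriv_Gamma_nat 1
    have hdiff : DifferentiableAt ℝ Real.Gamma 2 := by
      apply Real.differentiableAt_Gamma
      intro m h
      have : (0:ℝ) ≤ m := m.cast_nonneg
      linarith
    have h2 := hdiff.hasDerivAt
    rw [show ((1:ℕ):ℝ) + 1 = 2 by norm_num] at h
    rw [h] at h2
    refine h2.congr_deriv ?_
    simp [harmonic]; ring
  have hs := Real.convexOn_Gamma.slope_le_of_hasDerivAt (x := 1 + y) (y := 2)
    (by simp; linarith) (by simp) (by linarith) hd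
  rw [slope_def_field, div_le_iff₀ (by linarith), Real.Gamma_two] at hs
  have := Real.one_half_lt_eulerMascheroniConstant
  nlinarith

lemma gamma_up (y : ℝ) (h0 : 0 ≤ y) (h1 : y < 1) : Real.Gamma (1 + y) ≤ 1 := by
  have := Real.convexOn_Gamma.2 (show (1:ℝ) ∈ Ioi (0:ℝ) by simp)
    (show (2:ℝ) ∈ Ioi (0:ℝ) by simp) (show 0 ≤ 1 - y by linarith) h0 (by ring)
  simp only [smul_eq_mul, Real.Gamma_one, Real.Gamma_two] at this
  rw [show (1 - y) * 1 + y * 2 = 1 + y by ring] at this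
  linarith

lemma gamma_diff (y₁ y₂ : ℝ) (h0 : 0 ≤ y₁) (h : y₁ < y₂) (h1 : y₂ < 1) :
    (y₂ - y₁) / 2 ≤ y₂ / Real.Gamma (1 + y₂) - y₁ / Real.Gamma (1 + y₁) := by
  have l1 := gamma_low y₁ h0 (by linarith)
  have u1 := gamma_up y₁ h0 (by linarith)
  have u2 := gamma_up y₂ (by linarith) h1
  have p1 : 0 < Real.Gamma (1 + y₁) := Real.Gamma_pos_of_pos (by linarith)
  have p2 : 0 < Real.Gamma (1 + y₂) := Real.Gamma_pos_of_pos (by linarith)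
  have hc : (1 - y₁) * Real.Gamma (1 + y₂) ≤ (1 - y₂) * Real.Gamma (1 + y₁) + (y₂ - y₁) := by
    have hy : 0 < 1 - y₁ := by linarith
    have := Real.convexOn_Gamma.2 (show 1 + y₁ ∈ Ioi (0:ℝ) by simp; linarith)
      (show (2:ℝ) ∈ Ioi (0:ℝ) by simp)
      (show 0 ≤ (1 - y₂) / (1 - y₁) from div_nonneg (by linarith) hy.le)
      (show 0 ≤ (y₂ - y₁) / (1 - y₁) from div_nonneg (by linarith) hy.le) (by field_simp; ring)
    simp only [smul_eq_mul, Real.Gamma_two] at this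
    rw [show (1 - y₂) / (1 - y₁) * (1 + y₁) + (y₂ - y₁) / (1 - y₁) * 2 = 1 + y₂ by
      field_simp; ring] at this
    have h3 := mul_le_mul_of_nonneg_left this hy.le
    refine h3.trans (le_of_eq ?_)
    field_simp
  set A := Real.Gamma (1 + y₁)
  set B := Real.Gamma (1 + y₂)
  rw [div_sub_div _ _ p2.ne' p1.ne', le_div_iff₀ (mul_pos p2 p1)]
  have hBA : B * A ≤ 1 := by nlinarith
  have hy : 0 < 1 - y₁ := by linarith
  have key : (y₂ - y₁) / 2 ≤ y₂ * A - B * y₁ := by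
    have : (1 - y₁) * ((y₂ - y₁) / 2) ≤ (1 - y₁) * (y₂ * A - B * y₁) := by
      have h5 := mul_le_mul_of_nonneg_left hc h0
      have h6 := mul_le_mul_of_nonneg_left l1 (sub_nonneg.2 h.le)
      nlinarith
    exact le_of_mul_le_mul_left this hy
  nlinarith

lemma m_eq (ρ : ℝ) (h0 : 0 < ρ) (h1 : ρ ≤ 1) :
    Real.sin (π * ρ) * Real.Gamma ρ = π * ((1 - ρ) / Real.Gamma (1 + (1 - ρ))) := by
  rcases eq_or_lt_of_le h1 with h | h
  · subst h; simp
  · have hr := Real.Gamma_mul_Gamma_one_sub ρ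
    have hs : 0 < Real.sin (π * ρ) := Real.sin_pos_of_pos_of_lt_pi (by positivity)
      (by nlinarith [Real.pi_pos])
    have hg : 0 < Real.Gamma (1 - ρ) := Real.Gamma_pos_of_pos (by linarith)
    rw [add_comm, Real.Gamma_add_one (by linarith)]
    have : 1 - ρ ≠ 0 := by linarith
    rw [eq_div_iff hs.ne'] at hr
    field_simp
    linarith

lemma m_diff (ρ σ : ℝ) (h0 : 0 < ρ) (h : ρ < σ) (h1 : σ ≤ 1) :
    π / 2 * (σ - ρ) ≤ Real.sin (π * ρ) * Real.Gamma ρ - Real.sin (π * σ) * Real.Gamma σ := by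
  rw [m_eq ρ h0 (by linarith), m_eq σ (by linarith) h1]
  have := gamma_diff (1 - σ) (1 - ρ) (by linarith) (by linarith) (by linarith)
  have := mul_le_mul_of_nonneg_left this Real.pi_pos.le
  nlinarith

lemma m_nonneg (ρ : ℝ) (h0 : 0 < ρ) (h1 : ρ ≤ 1) : 0 ≤ Real.sin (π * ρ) * Real.Gamma ρ := by
  rw [m_eq ρ h0 h1]
  have : 0 < Real.Gamma (1 + (1 - ρ)) := Real.Gamma_pos_of_pos (by linarith)
  have : 0 ≤ 1 - ρ := by linarith
  positivity

/-- remainder kernel -/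
noncomputable def kk (l ρ : ℝ) (w : ℂ) : ℂ := Complex.exp (2 * ρ * w) / (Complex.exp (ρ * w) + l)

lemma gk_decomp (ρ l t : ℝ) (hρ : 0 < ρ) (hρ1 : ρ ≤ 1) (hl : 0 < l) (ht : 0 < t) (u : ℝ) :
    (l : ℂ) * gk ρ (l * t ^ ρ) (pt u) =
      (Real.exp (-(ρ * Real.log t)) : ℝ) * (Complex.exp (Complex.exp (pt u)) * Complex.exp (ρ * pt u)) -
      Complex.exp (Complex.exp (pt u)) * kk l ρ (pt u - Real.log t) := by
  set L := Real.log t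
  have e1 : ((l * t ^ ρ : ℝ) : ℂ) = l * Complex.exp (ρ * L) := by
    rw [Real.rpow_def_of_pos ht]; push_cast; rw [mul_comm (L : ℂ)]
  have e2 : Complex.exp (ρ * pt u) = Complex.exp (ρ * (pt u - L)) * Complex.exp (ρ * L) := by
    rw [← Complex.exp_add]; congr 1; ring
  have e3 : (Real.exp (-(ρ * L)) : ℂ) * Complex.exp (ρ * L) = 1 := by
    push_cast; rw [← Complex.exp_add]; simp
  have e4 : Complex.exp (2 * ρ * (pt u - L)) = Complex.exp (ρ * (pt u - L)) ^ 2 := by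
    rw [← Complex.exp_nat_mul]; congr 1; push_cast; ring
  have hne : Complex.exp (ρ * (pt u - L)) + l ≠ 0 :=
    den_ne ρ l hρ hρ1 hl _ (by simpa [pt_im] using th_pos.le) (by simp [pt_im])
  have hne2 : Complex.exp (ρ * (L : ℂ)) ≠ 0 := Complex.exp_ne_zero _
  unfold gk kk
  rw [e1, e2, e4]
  generalize Complex.exp (Complex.exp (pt u)) = K
  generalize Complex.exp (ρ * (pt u - L)) = X at *
  generalize Complex.exp (ρ * (L : ℂ)) = Y at *
  generalize (Real.exp (-(ρ * L)) : ℂ) = Z at *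
  have e5 : X * Y / (X * Y + l * Y) = X / (X + l) := by
    rw [← add_mul, mul_div_mul_right _ _ hne2]
  rw [e5]
  have e6 : Z * (K * (X * Y)) = K * X := by linear_combination (K * X) * e3
  rw [e6]
  field_simp
  ring

lemma hke_int (ρ : ℝ) (hρ : 0 < ρ) :
    Integrable (fun u => Complex.exp (Complex.exp (pt u)) * Complex.exp (ρ * pt u)) := by
  refine (int1 ρ hρ).mono' ?_ (Eventually.of_forall fun u => ?_)
  · unfold pt; fun_prop
  · rw [norm_mul, norm_exp_exp, norm_exp_mul_pt]

lemma kk_int (ρ l t : ℝ) (hρ : 0 < ρ) (hρ1 : ρ ≤ 1) (hl : 0 < l) (ht : 0 < t) :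
    Integrable (fun u => Complex.exp (Complex.exp (pt u)) * kk l ρ (pt u - Real.log t)) := by
  have h1 := (gk_int ρ (l * t ^ ρ) hρ hρ1 (by positivity)).const_mul (l : ℂ)
  have h2 := (hke_int ρ hρ).const_mul ((Real.exp (-(ρ * Real.log t)) : ℝ) : ℂ)
  refine (h2.sub h1).congr (Eventually.of_forall fun u => ?_)
  simp only [Pi.sub_apply]
  rw [gk_decomp ρ l t hρ hρ1 hl ht]
  ring

lemma ml_decomp (ρ l t : ℝ) (hρ : 0 < ρ) (hρ1 : ρ ≤ 1) (hl : 0 < l) (ht : 0 < t) :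
    l * (π * mittagLeffler ρ (-(l * t ^ ρ))) =
      Real.exp (-(ρ * Real.log t)) * (Real.sin (π * ρ) * Real.Gamma ρ) -
      ∫ u, (Complex.exp (Complex.exp (pt u)) * kk l ρ (pt u - Real.log t)).im := by
  have i1 := (hke_int ρ hρ).im
  have i2 := (kk_int ρ l t hρ hρ1 hl ht).im
  simp only [RCLike.im_to_complex] at i1 i2
  rw [ml_rep ρ _ hρ hρ1 (by positivity), ← form2 ρ hρ, ← integral_const_mul, ← integral_const_mul,
    ← integral_sub (i1.const_mul _) i2]
  congr 1
  ext u
  have := congrArg Complex.im (gk_decomp ρ l t hρ hρ1 hl ht u)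
  rw [Complex.im_ofReal_mul, Complex.sub_im, Complex.im_ofReal_mul] at this
  exact this

/-- dominating function -/
noncomputable def bd (r u : ℝ) : ℝ := Real.exp (-(√2/2) * Real.exp u) *
  ((Real.exp (2 * r * u) + Real.exp (2 * u)) * (|u| + th + 1))

lemma bd_int (r : ℝ) (hr : 0 < r) (hr1 : r < 1) : Integrable (bd r) := by
  have h := ((((int1 (3 * r) (by linarith)).add (int1 r hr)).add
    ((int1 (2 + r) (by linarith)).add (int1 (2 - r) (by linarith)))).const_mul (1 / r)).add
    (((int1 (2 * r) (by linarith)).add (int1 2 (by linarith))).const_mul (th + 1))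
  refine h.mono' ?_ (Eventually.of_forall fun u => ?_)
  · unfold bd; exact Continuous.aestronglyMeasurable (by fun_prop)
  · have hb : 0 ≤ bd r u := by
      have := th_pos
      unfold bd; positivity
    rw [Real.norm_of_nonneg hb]
    have hu : |u| ≤ (1 / r) * (Real.exp (r * u) + Real.exp (-(r * u))) := by
      rw [one_div, ← div_eq_inv_mul, le_div_iff₀ hr]
      have h1 := Real.add_one_le_exp (r * u)
      have h2 := Real.add_one_le_exp (-(r * u))
      have h3 := Real.exp_pos (r * u)
      have h4 := Real.exp_pos (-(r * u))
      rcases abs_cases u with ⟨h, _⟩ | ⟨h, _⟩ <;> rw [h] <;> nlinarith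
    have a1 : Real.exp (3 * r * u) = Real.exp (2 * r * u) * Real.exp (r * u) := by
      rw [← Real.exp_add]; ring_nf
    have a2 : Real.exp (r * u) = Real.exp (2 * r * u) * Real.exp (-(r * u)) := by
      rw [← Real.exp_add]; ring_nf
    have a3 : Real.exp ((2 + r) * u) = Real.exp (2 * u) * Real.exp (r * u) := by
      rw [← Real.exp_add]; ring_nf
    have a4 : Real.exp ((2 - r) * u) = Real.exp (2 * u) * Real.exp (-(r * u)) := by
      rw [← Real.exp_add]; ring_nf
    calc bd r u = Real.exp (-(√2/2) * Real.exp u) * (Real.exp (2 * r * u) + Real.exp (2 * u)) * |u|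
          + Real.exp (-(√2/2) * Real.exp u) * (Real.exp (2 * r * u) + Real.exp (2 * u)) * (th + 1) := by
          unfold bd; ring
      _ ≤ Real.exp (-(√2/2) * Real.exp u) * (Real.exp (2 * r * u) + Real.exp (2 * u)) *
          ((1 / r) * (Real.exp (r * u) + Real.exp (-(r * u))))
          + Real.exp (-(√2/2) * Real.exp u) * (Real.exp (2 * r * u) + Real.exp (2 * u)) * (th + 1) := by
          gcongr
      _ = _ := by
          simp only [Pi.add_apply]
          rw [a1, a3, a4]
          linear_combination (-(1 / r) * Real.exp (-(√2/2) * Real.exp u)) * a2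

lemma kk_diff (r ρ σ l L u : ℝ) (hr : 0 < r) (hrρ : r ≤ ρ) (h : ρ < σ) (hσ : σ ≤ 1) (hl : 0 < l)
    (hL : 0 ≤ L) :
    ‖kk l ρ (pt u - L) - kk l σ (pt u - L)‖ ≤ 6 / l * (Real.exp (-(2 * ρ * L)) *
      (Real.exp (2 * r * u) + Real.exp (2 * u))) * ((|u| + th + 1) * (1 + L)) * (σ - ρ) := by
  set W : ℂ := pt u - L with hW
  have hWre : W.re = u - L := by simp [hW, pt_re]
  have hWim : W.im = th := by simp [hW, pt_im]
  have hthp := th_pos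
  have hWn : ‖W‖ ≤ (|u| + th + 1) * (1 + L) := by
    have h1 := Complex.norm_le_abs_re_add_abs_im W
    rw [hWre, hWim, abs_of_pos hthp] at h1
    have h2 := abs_sub u L
    rw [abs_of_nonneg hL] at h2
    have h3 := abs_nonneg u
    nlinarith [mul_nonneg h3 hL, mul_nonneg hthp.le hL]
  have hden : ∀ τ ∈ Icc ρ σ, l / 2 ≤ ‖Complex.exp (τ * W) + l‖ := fun τ hτ =>
    (den_bound τ l (by linarith [hτ.1]) (by linarith [hτ.2]) hl W (by rw [hWim]; exact hthp.le)
      (by rw [hWim])).1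
  have hder : ∀ τ ∈ Icc ρ σ, HasDerivWithinAt (fun τ : ℝ => kk l τ W)
      (W * Complex.exp (2 * τ * W) * ((Complex.exp (τ * W) + l) + l) / (Complex.exp (τ * W) + l) ^ 2)
      (Icc ρ σ) τ := by
    intro τ hτ
    have hne : Complex.exp (τ * W) + l ≠ 0 := by
      have := hden τ hτ
      rw [← norm_pos_iff]; linarith
    have h0 : HasDerivAt (fun τ : ℝ => (τ : ℂ)) 1 τ := Complex.ofRealCLM.hasDerivAt
    have h1 : HasDerivAt (fun τ : ℝ => Complex.exp (2 * τ * W)) (Complex.exp (2 * τ * W) * (2 * 1 * W)) τ :=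
      ((h0.const_mul 2).mul_const W).cexp
    have h2 : HasDerivAt (fun τ : ℝ => Complex.exp (τ * W) + l) (Complex.exp (τ * W) * (1 * W)) τ :=
      ((h0.mul_const W).cexp).add_const _
    have h3 := h1.div h2 hne
    refine (h3.congr_deriv ?_).hasDerivWithinAt
    congr 1
    ring
  have hbound : ∀ τ ∈ Icc ρ σ, ‖W * Complex.exp (2 * τ * W) * ((Complex.exp (τ * W) + l) + l) / (Complex.exp (τ * W) + l) ^ 2‖ ≤
      6 / l * (Real.exp (-(2 * ρ * L)) *
      (Real.exp (2 * r * u) + Real.exp (2 * u))) * ((|u| + th + 1) * (1 + L)) := by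
    intro τ hτ
    have hd := hden τ hτ
    set D := Complex.exp (τ * W) + l
    have hD : 0 < ‖D‖ := by linarith
    have e1 : ‖Complex.exp (2 * τ * W)‖ ≤ Real.exp (-(2 * ρ * L)) *
        (Real.exp (2 * r * u) + Real.exp (2 * u)) := by
      rw [Complex.norm_exp]
      have : (2 * τ * W).re = -(2 * τ * L) + 2 * τ * u := by
        rw [show (2 * (τ : ℂ) * W) = ((2 * τ : ℝ) : ℂ) * W by push_cast; ring, Complex.re_ofReal_mul, hWre]; ring
      rw [this, Real.exp_add]
      have f1 : Real.exp (-(2 * τ * L)) ≤ Real.exp (-(2 * ρ * L)) := by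
        apply Real.exp_le_exp.2; nlinarith [hτ.1]
      have f2 : Real.exp (2 * τ * u) ≤ Real.exp (2 * r * u) + Real.exp (2 * u) := by
        rcases le_total 0 u with hu | hu
        · have : Real.exp (2 * τ * u) ≤ Real.exp (2 * u) := by
            apply Real.exp_le_exp.2; nlinarith [hτ.2]
          linarith [Real.exp_pos (2 * r * u)]
        · have : Real.exp (2 * τ * u) ≤ Real.exp (2 * r * u) := by
            apply Real.exp_le_exp.2; nlinarith [hτ.1]
          linarith [Real.exp_pos (2 * u)]
      gcongr
    have e2 : ‖D + l‖ / ‖D‖ ^ 2 ≤ 6 / l := by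
      have g1 : ‖D + l‖ ≤ ‖D‖ + l := by
        refine (norm_add_le _ _).trans ?_
        rw [Complex.norm_real, Real.norm_of_nonneg hl.le]
      rw [div_le_div_iff₀ (by positivity) hl]
      nlinarith
    rw [norm_div, norm_mul, norm_mul, norm_pow, mul_div_assoc]
    calc ‖W‖ * ‖Complex.exp (2 * τ * W)‖ * (‖D + l‖ / ‖D‖ ^ 2) ≤
        ((|u| + th + 1) * (1 + L)) * (Real.exp (-(2 * ρ * L)) *
        (Real.exp (2 * r * u) + Real.exp (2 * u))) * (6 / l) := by gcongr
      _ = _ := by ring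
  have := Convex.norm_image_sub_le_of_norm_hasDerivWithin_le hder hbound (convex_Icc ρ σ)
    (right_mem_Icc.2 h.le) (left_mem_Icc.2 h.le)
  rw [Real.norm_eq_abs, abs_sub_comm, abs_of_pos (sub_pos.2 h)] at this
  exact this

lemma rem_diff (r ρ σ l t : ℝ) (hr : 0 < r) (hrρ : r ≤ ρ) (h : ρ < σ) (hσ : σ ≤ 1) (hl : 0 < l)
    (ht : 1 ≤ t) :
    (∫ u, (Complex.exp (Complex.exp (pt u)) * kk l ρ (pt u - Real.log t)).im) -
     (∫ u, (Complex.exp (Complex.exp (pt u)) * kk l σ (pt u - Real.log t)).im) ≤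
     6 / l * Real.exp (-(2 * ρ * Real.log t)) * (1 + Real.log t) * (σ - ρ) * ∫ u, bd r u := by
  have hL : 0 ≤ Real.log t := Real.log_nonneg ht
  have i1 := (kk_int ρ l t (by linarith) (by linarith) hl (by linarith)).im
  have i2 := (kk_int σ l t (by linarith) (by linarith) hl (by linarith)).im
  simp only [RCLike.im_to_complex] at i1 i2
  rw [← integral_sub i1 i2, ← integral_const_mul]
  refine integral_mono (i1.sub i2) ((bd_int r hr (by linarith)).const_mul _) fun u => ?_
  simp only [Pi.sub_apply]
  rw [← Complex.sub_im, ← mul_sub]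
  refine (Complex.im_le_norm _).trans ?_
  rw [norm_mul, norm_exp_exp]
  have := kk_diff r ρ σ l (Real.log t) u hr hrρ h hσ hl hL
  calc _ ≤ Real.exp (-(√2/2) * Real.exp u) * _ := mul_le_mul_of_nonneg_left this (Real.exp_pos _).le
    _ = _ := by unfold bd; ring

lemma ml_strict (r l₀ : ℝ) (hr : 0 < r) (hr1 : r < 1) (hl₀ : 0 < l₀) :
    ∃ T : ℝ, 0 < T ∧ ∀ t : ℝ, T ≤ t → ∀ l : ℝ, l₀ ≤ l →
      StrictAntiOn (fun ρ : ℝ => mittagLeffler ρ (-(l * t ^ ρ))) (Icc r 1) := by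
  set C := ∫ u, bd r u
  have hC : 0 ≤ C := integral_nonneg fun u => by
    have := th_pos
    simp only [Pi.zero_apply]; unfold bd; positivity
  have hlim : Tendsto (fun t : ℝ => 6 / l₀ * C * (t ^ (-r) + Real.log t / t ^ r)) atTop (𝓝 0) := by
    have h1 := tendsto_rpow_neg_atTop hr
    have h2 := (isLittleO_log_rpow_atTop hr).tendsto_div_nhds_zero
    simpa using (h1.add h2).const_mul (6 / l₀ * C)
  obtain ⟨T, hT⟩ := eventually_atTop.1 (hlim.eventually (gt_mem_nhds (show (0:ℝ) < π / 2 by positivity)))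
  refine ⟨max T 1, by positivity, fun t ht l hl ρ hρ σ hσ hlt => ?_⟩
  have htT := hT t ((le_max_left _ _).trans ht)
  have ht1 : 1 ≤ t := (le_max_right _ _).trans ht
  have ht0 : 0 < t := by linarith
  have hl0 : 0 < l := by linarith
  have hL : 0 ≤ Real.log t := Real.log_nonneg ht1
  have hρ0 : 0 < ρ := by linarith [hρ.1]
  have d1 := ml_decomp ρ l t hρ0 hρ.2 hl0 ht0
  have d2 := ml_decomp σ l t (by linarith) hσ.2 hl0 ht0
  have d3 := rem_diff r ρ σ l t hr hρ.1 hlt hσ.2 hl0 ht1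
  have d4 := m_diff ρ σ hρ0 hlt hσ.2
  have d5 := m_nonneg σ (by linarith) hσ.2
  set e := Real.exp (-(ρ * Real.log t)) with he
  have he0 : 0 < e := Real.exp_pos _
  have e1 : Real.exp (-(2 * ρ * Real.log t)) = e * e := by
    rw [he, ← Real.exp_add]; ring_nf
  have e2 : Real.exp (-(σ * Real.log t)) ≤ e := Real.exp_le_exp.2 (by nlinarith)
  have e3 : e ≤ t ^ (-r) := by
    rw [Real.rpow_def_of_pos ht0]; exact Real.exp_le_exp.2 (by nlinarith [hρ.1])
  have e4 : 6 / l * C * (e * (1 + Real.log t)) < π / 2 := by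
    refine lt_of_le_of_lt ?_ htT
    have e5 : t ^ (-r) + Real.log t / t ^ r = t ^ (-r) * (1 + Real.log t) := by
      rw [Real.rpow_neg ht0.le]; ring
    rw [e5]
    gcongr
  rw [e1] at d3
  have key : 0 < l * (π * mittagLeffler ρ (-(l * t ^ ρ))) - l * (π * mittagLeffler σ (-(l * t ^ σ))) := by
    rw [d1, d2]
    have f1 := mul_le_mul_of_nonneg_right e2 d5
    have f2 := mul_le_mul_of_nonneg_left d4 he0.le
    have f3 : 0 < e * (σ - ρ) * (π / 2 - 6 / l * C * (e * (1 + Real.log t))) :=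
      mul_pos (mul_pos he0 (sub_pos.2 hlt)) (sub_pos.2 e4)
    nlinarith
  rw [← mul_sub, ← mul_sub] at key
  have := (mul_pos_iff_of_pos_left Real.pi_pos).1 ((mul_pos_iff_of_pos_left hl0).1 key)
  simpa using this

lemma ml_one (z : ℝ) : mittagLeffler 1 z = Real.exp z := by
  unfold mittagLeffler
  rw [Real.exp_eq_exp_ℝ, NormedSpace.exp_eq_tsum_div]
  congr 1; ext k
  rw [one_mul, Real.Gamma_nat_eq_factorial]

theorem stmt0 (ρ₀ lam₀ : ℝ) (hρ₀ : 0 < ρ₀) (hρ₀' : ρ₀ < 1) (hlam₀ : 0 < lam₀) :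
    ∃ T₀ : ℝ, 0 < T₀ ∧
      ∀ t₀ : ℝ, T₀ ≤ t₀ → ∀ lam : ℝ, lam₀ ≤ lam →
        (∀ ρ ∈ Set.Ico ρ₀ 1, 0 < mittagLeffler ρ (-(lam * t₀ ^ ρ))) ∧
        StrictAntiOn (fun ρ : ℝ => mittagLeffler ρ (-(lam * t₀ ^ ρ))) (Set.Ico ρ₀ 1) ∧
        ∀ ρ ∈ Set.Ico ρ₀ 1,
          Real.exp (-(lam * t₀)) < mittagLeffler ρ (-(lam * t₀ ^ ρ)) ∧
          mittagLeffler ρ (-(lam * t₀ ^ ρ)) ≤ mittagLeffler ρ₀ (-(lam * t₀ ^ ρ₀)) := by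
  obtain ⟨T, hT0, hT⟩ := ml_strict ρ₀ lam₀ hρ₀ hρ₀' hlam₀
  refine ⟨T, hT0, fun t ht l hl => ?_⟩
  have hs := hT t ht l hl
  have hlow : ∀ ρ ∈ Set.Ico ρ₀ 1, Real.exp (-(l * t)) < mittagLeffler ρ (-(l * t ^ ρ)) := by
    intro ρ hρ
    have := hs ⟨hρ.1, hρ.2.le⟩ (right_mem_Icc.2 hρ₀'.le) hρ.2
    simpa [ml_one] using this
  refine ⟨fun ρ hρ => (Real.exp_pos _).trans (hlow ρ hρ), hs.mono Ico_subset_Icc_self, fun ρ hρ =>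
    ⟨hlow ρ hρ, ?_⟩⟩
  exact hs.antitoneOn (left_mem_Icc.2 hρ₀'.le) ⟨hρ.1, hρ.2.le⟩ hρ.1
end

section
/- Let 0 < ρ₀ < 1 and λ₀ > 0. Then there exists a number T₀ = T₀(λ₀, ρ₀) > 0 such that for all t₀ ≥ T₀ and every constant c ≥ 0, the function U(t₀, ρ) = c · E_ρ(−λ₀ t₀^ρ) is monotonically decreasing with respect to ρ on the interval [ρ₀, 1), and strictly decreasing when c > 0. -/
open Set Real

open Set Real MeasureTheory Filter Topology

lemma le_of_sq_le_sq_aux {a b : ℝ} (h : a ^ 2 ≤ b ^ 2) (hb : 0 ≤ b) : a ≤ b :=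
  (abs_le_of_sq_le_sq' h hb).2

/-- the contour -/
noncomputable def W (σ r : ℝ) : ℂ := (σ : ℂ) + (r : ℂ) * (-1 + Complex.I)

lemma W_re (σ r : ℝ) : (W σ r).re = σ - r := by simp [W]; ring
lemma W_im (σ r : ℝ) : (W σ r).im = r := by simp [W]

lemma W_slit {σ r : ℝ} (hσ : 0 < σ) (hr : 0 ≤ r) : W σ r ∈ Complex.slitPlane := by
  rw [Complex.mem_slitPlane_iff, W_re, W_im]
  rcases hr.eq_or_lt with h | h
  · left; linarith
  · right; exact h.ne'

lemma W_ne {σ r : ℝ} (hσ : 0 < σ) (hr : 0 ≤ r) : W σ r ≠ 0 :=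
  Complex.slitPlane_ne_zero (W_slit hσ hr)

lemma W_normsq (σ r : ℝ) : ‖W σ r‖ ^ 2 = (σ - r) ^ 2 + r ^ 2 := by
  rw [Complex.sq_norm, Complex.normSq_apply, W_re, W_im]; ring

lemma W_norm_ge {σ : ℝ} (r : ℝ) (hσ : 0 < σ) : σ / 2 ≤ ‖W σ r‖ := by
  apply le_of_sq_le_sq_aux _ (norm_nonneg _)
  rw [W_normsq]; nlinarith [sq_nonneg (σ - 2 * r)]

lemma W_norm_ge_r (σ r : ℝ) : r ≤ ‖W σ r‖ := by
  have := Complex.abs_im_le_norm (W σ r)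
  rw [W_im] at this
  exact (le_abs_self r).trans this

lemma W_norm_le {σ r : ℝ} (hσ : 0 < σ) (hr : 0 ≤ r) : ‖W σ r‖ ≤ σ + 2 * r := by
  apply le_of_sq_le_sq_aux _ (by positivity)
  rw [W_normsq]; nlinarith [mul_nonneg hσ.le hr]

lemma W_arg_nonneg {σ r : ℝ} (hr : 0 ≤ r) : 0 ≤ (W σ r).arg := by
  rw [Complex.arg_nonneg_iff, W_im]; exact hr

lemma W_arg_le {σ r : ℝ} (hσ : 0 < σ) (hr : 0 ≤ r) : (W σ r).arg ≤ 3 * π / 4 := by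
  by_contra! h
  have h0 : 0 < ‖W σ r‖ := norm_pos_iff.2 (W_ne hσ hr)
  have hc := Complex.norm_mul_cos_arg (W σ r)
  have hs := Complex.norm_mul_sin_arg (W σ r)
  rw [W_re] at hc
  rw [W_im] at hs
  have hpi := Complex.arg_le_pi (W σ r)
  have h1 : Real.cos (W σ r).arg ≤ - (√2 / 2) := by
    rw [← Real.cos_pi_div_four, ← Real.cos_pi_sub]
    apply Real.cos_le_cos_of_nonneg_of_le_pi <;> linarith [Real.pi_pos]
  have h2 : Real.sin (W σ r).arg ≤ √2 / 2 := by
    rw [← Real.sin_pi_div_four, ← Real.sin_pi_sub]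
    apply Real.sin_le_sin_of_le_of_le_pi_div_two <;> linarith [Real.pi_pos]
  nlinarith

lemma W_cpow_cos {σ r ρ : ℝ} (hσ : 0 < σ) (hr : 0 ≤ r) (h0 : 0 < ρ) (h1 : ρ ≤ 1) :
    - (√2 / 2) ≤ Real.cos ((W σ r).arg * ρ) := by
  have ha := W_arg_nonneg (σ := σ) hr
  have hb := W_arg_le hσ hr
  rw [← Real.cos_pi_div_four, ← Real.cos_pi_sub]
  apply Real.cos_le_cos_of_nonneg_of_le_pi
  · positivity
  · linarith [Real.pi_pos]
  · nlinarith

lemma den_aux {σ r ρ x : ℝ} (hσ : 0 < σ) (hr : 0 ≤ r) (h0 : 0 < ρ) (h1 : ρ ≤ 1) (hx : 0 ≤ x) :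
    x / 2 ≤ ‖W σ r ^ (ρ : ℂ) + x‖ ∧ ‖W σ r ^ (ρ : ℂ)‖ / 2 ≤ ‖W σ r ^ (ρ : ℂ) + x‖ := by
  have hc := W_cpow_cos hσ hr h0 h1
  have hn : ‖W σ r ^ (ρ : ℂ)‖ = ‖W σ r‖ ^ ρ := Complex.norm_cpow_real _ _
  have hA : 0 ≤ ‖W σ r‖ ^ ρ := by positivity
  set A := ‖W σ r‖ ^ ρ with hAdef
  set φ := (W σ r).arg * ρ with hφ
  have hsq : ‖W σ r ^ (ρ : ℂ) + x‖ ^ 2 = A ^ 2 + x ^ 2 + 2 * A * x * Real.cos φ := by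
    rw [Complex.cpow_ofReal, Complex.sq_norm, Complex.normSq_apply]
    simp only [Complex.add_re, Complex.mul_re, Complex.ofReal_re, Complex.ofReal_im,
      Complex.add_im, Complex.mul_im, Complex.I_re, Complex.I_im]
    rw [← hφ, ← hAdef]
    linear_combination A ^ 2 * (Real.sin_sq_add_cos_sq φ)
  have h2 : √2 ^ 2 = 2 := Real.sq_sqrt (by norm_num)
  have h3 : A ^ 2 + x ^ 2 - √2 * A * x ≤ ‖W σ r ^ (ρ : ℂ) + x‖ ^ 2 := by
    rw [hsq]
    nlinarith [mul_nonneg hA hx]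
  constructor
  · apply le_of_sq_le_sq_aux _ (norm_nonneg _)
    nlinarith [sq_nonneg (√2 * A - x)]
  · apply le_of_sq_le_sq_aux _ (norm_nonneg _)
    rw [hn]
    nlinarith [sq_nonneg (√2 * x - A)]

lemma W_continuous (σ : ℝ) : Continuous (W σ) := by unfold W; fun_prop

lemma norm_exp_W (σ r : ℝ) : ‖Complex.exp (W σ r)‖ = Real.exp (σ - r) := by
  rw [Complex.norm_exp, W_re]

lemma norm_d : ‖(-1 + Complex.I : ℂ)‖ ≤ 2 := by
  calc _ ≤ ‖(-1 : ℂ)‖ + ‖Complex.I‖ := norm_add_le _ _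
    _ = 2 := by simp; norm_num

/-- admissible amplitude functions -/
structure Good (g g' : ℂ → ℂ) : Prop where
  meas : Measurable g
  meas' : Measurable g'
  hd : ∀ σ r : ℝ, 0 < σ → 0 ≤ r → HasDerivAt g (g' (W σ r)) (W σ r)
  hb : ∀ σ₀ : ℝ, 0 < σ₀ → ∃ M : ℝ, ∀ σ r : ℝ, σ₀ ≤ σ → 0 ≤ r → ‖g (W σ r)‖ ≤ M ∧ ‖g' (W σ r)‖ ≤ M
  hre : ∀ σ : ℝ, 0 < σ → (g σ).im = 0

lemma int_exp (c : ℝ) : IntegrableOn (fun r : ℝ => Real.exp (c - r)) (Ioi 0) := by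
  have := (integrableOn_exp_neg_Ioi 0).const_mul (Real.exp c)
  have e : (fun r : ℝ => Real.exp (c - r)) = fun r => Real.exp c * Real.exp (-r) := by
    funext r
    rw [← Real.exp_add, sub_eq_add_neg]
  rw [e]
  exact this

lemma int_bdd {g : ℂ → ℂ} (hg : Measurable g) {σ M : ℝ}
    (hM : ∀ r : ℝ, 0 ≤ r → ‖g (W σ r)‖ ≤ M) :
    IntegrableOn (fun r : ℝ => Complex.exp (W σ r) * g (W σ r) * (-1 + Complex.I)) (Ioi 0) := by
  refine Integrable.mono' ((int_exp σ).const_mul (2 * M)) ?_ ?_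
  · have := (W_continuous σ).measurable
    apply Measurable.aestronglyMeasurable
    fun_prop
  · refine (ae_restrict_iff' measurableSet_Ioi).2 (Eventually.of_forall fun r hr => ?_)
    rw [norm_mul, norm_mul, norm_exp_W]
    have h1 := hM r (le_of_lt hr)
    have := norm_d
    calc _ ≤ Real.exp (σ - r) * M * 2 := by gcongr; exact mul_nonneg (Real.exp_pos _).le ((norm_nonneg _).trans h1)
      _ = _ := by ring

lemma W_hasDeriv_r (σ r : ℝ) : HasDerivAt (W σ) (-1 + Complex.I) r := by
  unfold W
  have := ((Complex.ofRealCLM.hasDerivAt (x := r)).mul_const (-1 + Complex.I)).const_add (σ : ℂ)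
  simpa using this

lemma W_hasDeriv_σ (σ r : ℝ) : HasDerivAt (fun s => W s r) 1 σ := by
  unfold W
  have := (Complex.ofRealCLM.hasDerivAt (x := σ)).add_const ((r : ℂ) * (-1 + Complex.I))
  simpa using this

lemma Good.hdexp {g g' : ℂ → ℂ} (h : Good g g') {σ r : ℝ} (hσ : 0 < σ) (hr : 0 ≤ r) :
    HasDerivAt (fun w => Complex.exp w * g w)
      (Complex.exp (W σ r) * (g (W σ r) + g' (W σ r))) (W σ r) := by
  have := (Complex.hasDerivAt_exp (W σ r)).mul (h.hd σ r hσ hr)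
  exact this.congr_deriv (by ring)

lemma Good.integral_deriv {g g' : ℂ → ℂ} (h : Good g g') {σ : ℝ} (hσ : 0 < σ) :
    (∫ r in Ioi (0:ℝ), Complex.exp (W σ r) * (g (W σ r) + g' (W σ r)) * (-1 + Complex.I)).im
      = 0 := by
  obtain ⟨M, hM⟩ := h.hb σ hσ
  have hder : ∀ r : ℝ, 0 ≤ r → HasDerivAt (fun r => Complex.exp (W σ r) * g (W σ r))
      (Complex.exp (W σ r) * (g (W σ r) + g' (W σ r)) * (-1 + Complex.I)) r := fun r hr =>
    HasDerivAt.comp r (h.hdexp hσ hr) (W_hasDeriv_r σ r)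
  have key := integral_Ioi_of_hasDerivAt_of_tendsto (a := (0:ℝ)) (m := (0:ℂ))
    (f := fun r => Complex.exp (W σ r) * g (W σ r))
    (f' := fun r => Complex.exp (W σ r) * (g (W σ r) + g' (W σ r)) * (-1 + Complex.I))
    (hder 0 le_rfl).continuousAt.continuousWithinAt (fun r hr => hder r (le_of_lt hr))
    (int_bdd (g := fun w => g w + g' w) (h.meas.add h.meas') (M := M + M) (fun r hr =>
      (norm_add_le _ _).trans (add_le_add (hM σ r le_rfl hr).1 (hM σ r le_rfl hr).2)))
    (by
      apply squeeze_zero_norm' (a := fun r => Real.exp (σ - r) * M)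
      · filter_upwards [eventually_ge_atTop 0] with r hr
        rw [norm_mul, norm_exp_W]
        gcongr
        exact (hM σ r le_rfl hr).1
      · rw [← zero_mul M]
        apply Tendsto.mul_const
        apply Real.tendsto_exp_atBot.comp
        exact tendsto_atBot_add_const_left _ σ tendsto_neg_atTop_atBot)
  rw [key]
  have e : W σ 0 = σ := by simp [W]
  rw [e, ← Complex.ofReal_exp]
  simp [h.hre σ hσ]

/-- invariance under moving the vertex -/
lemma Good.invariant {g g' : ℂ → ℂ} (h : Good g g') {σ τ : ℝ} (hσ : 0 < σ) (hτ : 0 < τ) :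
    (∫ r in Ioi (0:ℝ), Complex.exp (W σ r) * g (W σ r) * (-1 + Complex.I)).im =
    (∫ r in Ioi (0:ℝ), Complex.exp (W τ r) * g (W τ r) * (-1 + Complex.I)).im := by
  have main : ∀ s : ℝ, 0 < s → HasDerivAt (fun s : ℝ =>
      (∫ r in Ioi (0:ℝ), Complex.exp (W s r) * g (W s r) * (-1 + Complex.I)).im) 0 s := by
    intro s hs
    obtain ⟨M, hM⟩ := h.hb (s / 2) (by positivity)
    have hM0 : 0 ≤ M := (norm_nonneg _).trans (hM s 0 (by linarith) le_rfl).1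
    have key := (hasDerivAt_integral_of_dominated_loc_of_deriv_le (𝕜 := ℝ)
      (μ := volume.restrict (Ioi (0:ℝ))) (x₀ := s) (s := Ioo (s / 2) (s + 1))
      (F := fun s r => Complex.exp (W s r) * g (W s r) * (-1 + Complex.I))
      (F' := fun s r => Complex.exp (W s r) * (g (W s r) + g' (W s r)) * (-1 + Complex.I))
      (bound := fun r => 2 * (M + M) * Real.exp (s + 1 - r))
      (Ioo_mem_nhds (by linarith) (by linarith))
      (by
        filter_upwards [Ioo_mem_nhds (show s / 2 < s by linarith) (show s < s + 1 by linarith)]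
          with x hx
        exact (int_bdd h.meas (fun r hr => (hM x r hx.1.le hr).1)).aestronglyMeasurable)
      (int_bdd h.meas (fun r hr => (hM s r (by linarith) hr).1))
      (int_bdd (g := fun w => g w + g' w) (h.meas.add h.meas') (M := M + M) (fun r hr =>
        (norm_add_le _ _).trans (add_le_add (hM s r (by linarith) hr).1
          (hM s r (by linarith) hr).2))).aestronglyMeasurable
      (by
        refine (ae_restrict_iff' measurableSet_Ioi).2 (Eventually.of_forall fun r hr x hx => ?_)
        rw [norm_mul, norm_mul, norm_exp_W]
        have h1 := hM x r hx.1.le (le_of_lt hr)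
        have h2 := norm_d
        have h3 : ‖g (W x r) + g' (W x r)‖ ≤ M + M :=
          (norm_add_le _ _).trans (add_le_add h1.1 h1.2)
        calc _ ≤ Real.exp (s + 1 - r) * (M + M) * 2 := by gcongr; exact hx.2.le
          _ = _ := by ring)
      ((int_exp (s + 1)).const_mul _)
      (by
        refine (ae_restrict_iff' measurableSet_Ioi).2 (Eventually.of_forall fun r hr x hx => ?_)
        have hx0 : 0 < x := lt_trans (by positivity) hx.1
        have := HasDerivAt.comp (h := fun s => W s r) x
          (h.hdexp (σ := x) (r := r) hx0 (le_of_lt (mem_Ioi.1 hr))) (W_hasDeriv_σ x r)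
        rw [mul_one] at this
        exact this.mul_const _)).2
    have := (Complex.imCLM.hasFDerivAt.comp_hasDerivAt s key)
    simp only [Complex.imCLM_apply] at this
    rw [h.integral_deriv hs] at this
    exact this
  exact isOpen_Ioi.is_const_of_deriv_eq_zero (s := Ioi (0:ℝ)) isPreconnected_Ioi
    (fun s hs => (main s hs).differentiableAt.differentiableWithinAt)
    (fun s hs => (main s hs).deriv) (mem_Ioi.2 hσ) (mem_Ioi.2 hτ)

noncomputable def Zl (y : ℝ) : ℂ := 1 - y * Complex.I

lemma Zl_re (y : ℝ) : (Zl y).re = 1 := by simp [Zl]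

lemma Zl_ne (y : ℝ) : Zl y ≠ 0 := by
  intro h
  have := Zl_re y
  rw [h] at this
  simp at this

lemma Zl_slit (y : ℝ) : Zl y ∈ Complex.slitPlane := by
  rw [Complex.mem_slitPlane_iff, Zl_re]; left; norm_num

lemma norm_exp_Zl (y r : ℝ) : ‖Complex.exp (-(Zl y * r))‖ = Real.exp (-r) := by
  rw [Complex.norm_exp]; simp [Zl_re]

lemma Zl_int {c : ℝ} (hc : 0 < c) (y : ℝ) :
    IntegrableOn (fun r : ℝ => ((r ^ (c - 1) : ℝ) : ℂ) * Complex.exp (-(Zl y * r))) (Ioi 0) := by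
  refine Integrable.mono' (Real.GammaIntegral_convergent hc) ?_ ?_
  · apply Measurable.aestronglyMeasurable
    fun_prop
  · refine (ae_restrict_iff' measurableSet_Ioi).2 (Eventually.of_forall fun r hr => ?_)
    rw [norm_mul, norm_exp_Zl, Complex.norm_real, Real.norm_of_nonneg
      (Real.rpow_nonneg (le_of_lt hr) _), mul_comm]

lemma Zl_parts {b : ℝ} (hb : 0 < b) (y : ℝ) :
    (b : ℂ) * ∫ r in Ioi (0:ℝ), ((r ^ (b - 1) : ℝ) : ℂ) * Complex.exp (-(Zl y * r)) =
    Zl y * ∫ r in Ioi (0:ℝ), ((r ^ b : ℝ) : ℂ) * Complex.exp (-(Zl y * r)) := by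
  have hi1 := (Zl_int hb y).const_mul (b : ℂ)
  have hi2 := (Zl_int (c := b + 1) (by linarith) y).const_mul (Zl y)
  rw [add_sub_cancel_right] at hi2
  have key := integral_Ioi_of_hasDerivAt_of_tendsto (a := (0:ℝ)) (m := (0:ℂ))
    (f := fun r : ℝ => ((r ^ b : ℝ) : ℂ) * Complex.exp (-(Zl y * r)))
    (f' := fun r : ℝ => (b : ℂ) * (((r ^ (b - 1) : ℝ) : ℂ) * Complex.exp (-(Zl y * r))) -
      Zl y * (((r ^ b : ℝ) : ℂ) * Complex.exp (-(Zl y * r))))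
    (by
      apply Continuous.continuousWithinAt
      apply Continuous.mul
      · exact Complex.continuous_ofReal.comp (Real.continuous_rpow_const hb.le)
      · fun_prop)
    (fun r hr => by
      have h1 := (Real.hasDerivAt_rpow_const (p := b) (Or.inl (ne_of_gt hr))).ofReal_comp
      have h2 : HasDerivAt (fun r : ℝ => Complex.exp (-(Zl y * r)))
          (Complex.exp (-(Zl y * r)) * (-(Zl y * 1))) r := by
        have := ((Complex.ofRealCLM.hasDerivAt (x := r)).const_mul (Zl y)).neg.cexp
        simpa using this
      refine (h1.mul h2).congr_deriv ?_
      push_cast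
      ring)
    (hi1.sub hi2)
    (by
      rw [tendsto_zero_iff_norm_tendsto_zero]
      have := tendsto_rpow_mul_exp_neg_mul_atTop_nhds_zero b 1 one_pos
      refine this.congr' ?_
      filter_upwards [eventually_ge_atTop 0] with r hr
      rw [norm_mul, norm_exp_Zl, Complex.norm_real, Real.norm_of_nonneg (Real.rpow_nonneg hr _)]
      simp)
  rw [integral_sub hi1 hi2, integral_const_mul, integral_const_mul] at key
  rw [← sub_eq_zero, key]
  simp [Real.zero_rpow hb.ne']

lemma gam_rot {b : ℝ} (hb : 0 < b) :
    Zl 1 ^ (b : ℂ) * ∫ r in Ioi (0:ℝ), ((r ^ (b - 1) : ℝ) : ℂ) * Complex.exp (-(Zl 1 * r))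
      = Real.Gamma b := by
  have main : ∀ y : ℝ, HasDerivAt (fun y : ℝ => Zl y ^ (b : ℂ) *
      ∫ r in Ioi (0:ℝ), ((r ^ (b - 1) : ℝ) : ℂ) * Complex.exp (-(Zl y * r))) 0 y := by
    intro y
    have hZ : ∀ y : ℝ, HasDerivAt Zl (-Complex.I) y := by
      intro y
      unfold Zl
      have := ((Complex.ofRealCLM.hasDerivAt (x := y)).mul_const Complex.I).const_sub 1
      simpa using this
    have key := (hasDerivAt_integral_of_dominated_loc_of_deriv_le (𝕜 := ℝ)
      (μ := volume.restrict (Ioi (0:ℝ))) (x₀ := y) (s := univ)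
      (F := fun y r => ((r ^ (b - 1) : ℝ) : ℂ) * Complex.exp (-(Zl y * r)))
      (F' := fun y r => Complex.I * (((r ^ b : ℝ) : ℂ) * Complex.exp (-(Zl y * r))))
      (bound := fun r => Real.exp (-r) * r ^ (b + 1 - 1))
      univ_mem
      (Eventually.of_forall fun y => (Zl_int hb y).aestronglyMeasurable)
      (Zl_int hb y)
      (by
        have := ((Zl_int (c := b + 1) (by linarith) y).const_mul Complex.I).aestronglyMeasurable
        rwa [add_sub_cancel_right] at this)
      (by
        refine (ae_restrict_iff' measurableSet_Ioi).2 (Eventually.of_forall fun r hr x hx => ?_)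
        rw [norm_mul, norm_mul, norm_exp_Zl, Complex.norm_real, Real.norm_of_nonneg
          (Real.rpow_nonneg (le_of_lt hr) _), Complex.norm_I, one_mul, mul_comm,
          add_sub_cancel_right])
      (Real.GammaIntegral_convergent (by linarith))
      (by
        refine (ae_restrict_iff' measurableSet_Ioi).2 (Eventually.of_forall fun r hr x hx => ?_)
        have h1 := (((hZ x).mul_const (r : ℂ)).neg.cexp).const_mul ((r ^ (b - 1) : ℝ) : ℂ)
        refine h1.congr_deriv ?_
        have : r ^ b = r ^ (b - 1) * r := by
          rw [← Real.rpow_add_one (ne_of_gt hr)]; simp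
        rw [this]; simp only [Pi.neg_apply]; push_cast; ring)).2
    have hp : HasDerivAt (fun y : ℝ => Zl y ^ (b : ℂ)) (b * Zl y ^ ((b : ℂ) - 1) * (-Complex.I)) y :=
      HasDerivAt.comp y (Complex.hasStrictDerivAt_cpow_const (Zl_slit y)).hasDerivAt (hZ y)
    refine (hp.mul key).congr_deriv ?_
    rw [integral_const_mul, Complex.cpow_sub _ _ (Zl_ne y), Complex.cpow_one]
    have := Zl_parts hb y
    have hz := Zl_ne y
    field_simp
    linear_combination (-Zl y ^ (b : ℂ) * Complex.I) * this
  have hc := is_const_of_deriv_eq_zero (fun y => (main y).differentiableAt)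
    (fun y => (main y).deriv) 1 0
  refine hc.trans ?_
  have : Zl 0 = 1 := by simp [Zl]
  simp only [this, Complex.one_cpow, one_mul]
  rw [Real.Gamma_eq_integral hb, ← integral_complex_ofReal]
  congr 1
  funext r
  push_cast
  ring

/-- the Hankel-type integral -/
noncomputable def H (σ a : ℝ) : ℂ :=
  ∫ r in Ioi (0:ℝ), Complex.exp (W σ r) * W σ r ^ ((-a : ℝ) : ℂ) * (-1 + Complex.I)

lemma meas_cpow (a : ℂ) : Measurable (fun w : ℂ => w ^ a) := by fun_prop

lemma W_cpow_bound {σ₀ σ r a : ℝ} (h0 : 0 < σ₀) (h : σ₀ ≤ σ) (ha : a ≤ 0) :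
    ‖W σ r ^ (a : ℂ)‖ ≤ (σ₀ / 2) ^ a := by
  rw [Complex.norm_cpow_real]
  apply Real.rpow_le_rpow_of_nonpos (by positivity) _ ha
  have := W_norm_ge (σ := σ) r (by linarith)
  linarith

lemma good_pow {a : ℝ} (ha : 0 ≤ a) : Good (fun w => w ^ ((-a : ℝ) : ℂ))
    (fun w => ((-a : ℝ) : ℂ) * w ^ ((-(a + 1) : ℝ) : ℂ)) where
  meas := meas_cpow _
  meas' := (meas_cpow _).const_mul _
  hd := by
    intro σ r hσ hr
    have := (Complex.hasStrictDerivAt_cpow_const (c := ((-a : ℝ) : ℂ)) (W_slit hσ hr)).hasDerivAt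
    refine this.congr_deriv ?_
    congr 2
    push_cast; ring
  hb := by
    intro σ₀ h0
    refine ⟨max ((σ₀ / 2) ^ (-a)) (a * (σ₀ / 2) ^ (-(a + 1))), fun σ r hσ hr => ⟨?_, ?_⟩⟩
    · exact (W_cpow_bound h0 hσ (by linarith)).trans (le_max_left _ _)
    · refine le_trans ?_ (le_max_right _ _)
      rw [norm_mul, Complex.norm_real, norm_neg, Real.norm_of_nonneg ha]
      gcongr
      exact W_cpow_bound h0 hσ (by linarith)
  hre := by
    intro σ hσ
    rw [← Complex.ofReal_cpow hσ.le, Complex.ofReal_im]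

lemma H_rec {σ a : ℝ} (hσ : 0 < σ) (ha : 0 ≤ a) : (H σ a).im = a * (H σ (a + 1)).im := by
  have h := (good_pow ha).integral_deriv hσ
  have e : ∀ c : ℝ, 0 ≤ c → IntegrableOn (fun r : ℝ => Complex.exp (W σ r) *
      W σ r ^ ((-c : ℝ) : ℂ) * (-1 + Complex.I)) (Ioi 0) := fun c hc =>
    int_bdd (meas_cpow _) (fun r hr => W_cpow_bound hσ le_rfl (by linarith))
  have e2 : (∫ r in Ioi (0:ℝ), Complex.exp (W σ r) * (W σ r ^ ((-a : ℝ) : ℂ) +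
      ((-a : ℝ) : ℂ) * W σ r ^ ((-(a + 1) : ℝ) : ℂ)) * (-1 + Complex.I)) =
      H σ a + ((-a : ℝ) : ℂ) * H σ (a + 1) := by
    unfold H
    rw [← integral_const_mul, ← integral_add (e a ha) ((e (a + 1) (by linarith)).const_mul _)]
    congr 1
    funext r
    ring
  rw [e2] at h
  rw [Complex.add_im, Complex.im_ofReal_mul] at h
  linarith

lemma ofReal_mul_cpow {r : ℝ} (hr : 0 < r) {z : ℂ} (hz : z ≠ 0) (c : ℂ) :
    ((r : ℂ) * z) ^ c = (r : ℂ) ^ c * z ^ c := by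
  have hr' : (r : ℂ) ≠ 0 := Complex.ofReal_ne_zero.2 hr.ne'
  rw [Complex.cpow_def_of_ne_zero (mul_ne_zero hr' hz), Complex.cpow_def_of_ne_zero hr',
    Complex.cpow_def_of_ne_zero hz, Complex.log_ofReal_mul hr hz, ← Complex.ofReal_log hr.le,
    add_mul, Complex.exp_add]

lemma d_eq : (-1 + Complex.I : ℂ) = - Zl 1 := by simp [Zl]; ring

lemma log_d : Complex.log (- Zl 1) = Complex.log (Zl 1) + π * Complex.I := by
  have him : (Zl 1).im < 0 := by simp [Zl]
  apply Complex.ext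
  · simp [Complex.log_re]
  · rw [Complex.log_im, Complex.arg_neg_eq_arg_add_pi_of_im_neg him]
    simp [Complex.log_im]

lemma H_lim {a : ℝ} (ha : 0 < a) (ha1 : a < 1) :
    Tendsto (fun σ => H σ a) (𝓝[>] 0) (𝓝 (Real.Gamma (1 - a) *
      Complex.exp (((1 - a : ℝ) : ℂ) * (π * Complex.I)))) := by
  have hval : (∫ r in Ioi (0:ℝ), Complex.exp (W 0 r) * W 0 r ^ ((-a : ℝ) : ℂ) *
      (-1 + Complex.I)) = Real.Gamma (1 - a) *
      Complex.exp (((1 - a : ℝ) : ℂ) * (π * Complex.I)) := by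
    have h1 : (∫ r in Ioi (0:ℝ), Complex.exp (W 0 r) * W 0 r ^ ((-a : ℝ) : ℂ) *
      (-1 + Complex.I)) = ∫ r in Ioi (0:ℝ), (-Zl 1) ^ ((1 - a : ℝ) : ℂ) *
        (((r ^ ((1 - a) - 1) : ℝ) : ℂ) * Complex.exp (-(Zl 1 * r))) := by
      refine setIntegral_congr_fun measurableSet_Ioi fun r hr => ?_
      have hr' : (0:ℝ) ≤ r := le_of_lt hr
      have hne : (-Zl 1) ≠ 0 := neg_ne_zero.2 (Zl_ne 1)
      simp only [W, d_eq, Complex.ofReal_zero, zero_add]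
      rw [ofReal_mul_cpow hr hne]
      have h3 : (-Zl 1) ^ ((1 - a : ℝ) : ℂ) = (-Zl 1) ^ ((-a : ℝ) : ℂ) * (-Zl 1) := by
        rw [show ((1 - a : ℝ) : ℂ) = ((-a : ℝ) : ℂ) + 1 by push_cast; ring,
          Complex.cpow_add _ _ hne, Complex.cpow_one]
      rw [h3, Complex.ofReal_cpow hr', show (1 - a - 1) = -a by ring,
        show (r : ℂ) * -Zl 1 = -(Zl 1 * r) by ring]
      ring
    rw [h1, integral_const_mul, ← gam_rot (b := 1 - a) (by linarith),
      Complex.cpow_def_of_ne_zero (neg_ne_zero.2 (Zl_ne 1)), log_d,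
      Complex.cpow_def_of_ne_zero (Zl_ne 1), add_mul, Complex.exp_add,
      mul_comm (((1 - a : ℝ) : ℂ)) (π * Complex.I)]
    ring
  rw [← hval]
  unfold H
  refine tendsto_integral_filter_of_dominated_convergence
    (fun r => 2 * Real.exp 1 * (Real.exp (-r) * r ^ ((1 - a) - 1))) ?_ ?_ ?_ ?_
  · refine Eventually.of_forall fun σ => ?_
    have := (W_continuous σ).measurable
    have h2 := (meas_cpow ((-a : ℝ) : ℂ)).comp this
    apply Measurable.aestronglyMeasurable
    fun_prop
  · filter_upwards [Ioo_mem_nhdsGT (show (0:ℝ) < 1 by norm_num)] with σ hσ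
    refine (ae_restrict_iff' measurableSet_Ioi).2 (Eventually.of_forall fun r hr => ?_)
    have hr' : 0 < r := hr
    rw [norm_mul, norm_mul, norm_exp_W, Complex.norm_cpow_real]
    have h1 : ‖W σ r‖ ^ (-a) ≤ r ^ (-a) :=
      Real.rpow_le_rpow_of_nonpos hr' (W_norm_ge_r σ r) (by linarith)
    have h2 : Real.exp (σ - r) ≤ Real.exp 1 * Real.exp (-r) := by
      rw [← Real.exp_add]; apply Real.exp_le_exp.2; linarith [hσ.2]
    have h3 := norm_d
    calc _ ≤ (Real.exp 1 * Real.exp (-r)) * r ^ (-a) * 2 := by gcongr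
      _ = _ := by rw [show (1 - a - 1) = -a by ring]; ring
  · exact (Real.GammaIntegral_convergent (by linarith)).const_mul _
  · refine (ae_restrict_iff' measurableSet_Ioi).2 (Eventually.of_forall fun r hr => ?_)
    have hr' : 0 < r := hr
    have hc : ContinuousAt (fun σ => W σ r) 0 := (W_hasDeriv_σ 0 r).continuousAt
    have hs : W 0 r ∈ Complex.slitPlane := by
      rw [Complex.mem_slitPlane_iff, W_im]; right; exact hr'.ne'
    have : ContinuousAt (fun σ => Complex.exp (W σ r) * W σ r ^ ((-a : ℝ) : ℂ) *
      (-1 + Complex.I)) 0 := by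
      refine (ContinuousAt.mul ?_ ?_).mul continuousAt_const
      · exact Complex.continuous_exp.continuousAt.comp hc
      · exact hc.cpow continuousAt_const hs
    exact this.tendsto.mono_left nhdsWithin_le_nhds

lemma H_base {σ a : ℝ} (hσ : 0 < σ) (ha : 0 < a) (ha1 : a < 1) :
    (H σ a).im = π / Real.Gamma a := by
  have h1 := (Complex.continuous_im.tendsto _).comp (H_lim ha ha1)
  have h2 : Tendsto (Complex.im ∘ fun σ => H σ a) (𝓝[>] 0) (𝓝 (H σ a).im) := by
    apply tendsto_const_nhds.congr'
    filter_upwards [self_mem_nhdsWithin] with τ hτ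
    exact (good_pow ha.le).invariant hσ hτ
  rw [tendsto_nhds_unique h2 h1, Complex.im_ofReal_mul]
  rw [show (((1 - a : ℝ) : ℂ) * (π * Complex.I)) = ((π * (1 - a) : ℝ) : ℂ) * Complex.I by
    push_cast; ring, Complex.exp_ofReal_mul_I_im]
  have h3 := Real.Gamma_mul_Gamma_one_sub a
  have hs : 0 < Real.sin (π * a) := Real.sin_pos_of_pos_of_lt_pi (by positivity)
    (by nlinarith [Real.pi_pos])
  have hg := Real.Gamma_pos_of_pos ha
  rw [show π * (1 - a) = π - π * a by ring, Real.sin_pi_sub]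
  rw [eq_div_iff hs.ne'] at h3
  rw [eq_div_iff hg.ne']
  linarith

lemma H_one {σ : ℝ} (hσ : 0 < σ) : (H σ 1).im = π / Real.Gamma 1 := by
  have hinv : (H σ 1).im = (H 2 1).im := (good_pow zero_le_one).invariant hσ two_pos
  rw [hinv]
  have hH : Tendsto (fun a => H 2 a) (𝓝[<] 1) (𝓝 (H 2 1)) := by
    unfold H
    refine tendsto_integral_filter_of_dominated_convergence
      (fun r => 2 * Real.exp (2 - r)) ?_ ?_ ?_ ?_
    · refine Eventually.of_forall fun a => ?_
      have := (W_continuous 2).measurable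
      have h2 := (meas_cpow ((-a : ℝ) : ℂ)).comp this
      apply Measurable.aestronglyMeasurable
      fun_prop
    · filter_upwards [Ioo_mem_nhdsLT (show (0:ℝ) < 1 by norm_num)] with a ha
      refine (ae_restrict_iff' measurableSet_Ioi).2 (Eventually.of_forall fun r hr => ?_)
      rw [norm_mul, norm_mul, norm_exp_W]
      have h1 := W_cpow_bound (r := r) two_pos (le_refl (2:ℝ)) (show -a ≤ 0 by linarith [ha.1])
      rw [div_self two_ne_zero, Real.one_rpow] at h1
      have h3 := norm_d
      calc _ ≤ Real.exp (2 - r) * 1 * 2 := by gcongr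
        _ = _ := by ring
    · exact (int_exp 2).const_mul _
    · refine (ae_restrict_iff' measurableSet_Ioi).2 (Eventually.of_forall fun r hr => ?_)
      have hr' : 0 < r := hr
      have : ContinuousAt (fun a : ℝ => Complex.exp (W 2 r) * W 2 r ^ ((-a : ℝ) : ℂ) *
        (-1 + Complex.I)) 1 := by
        refine (ContinuousAt.mul continuousAt_const ?_).mul continuousAt_const
        refine ContinuousAt.const_cpow ?_ (Or.inl (W_ne two_pos hr'.le))
        exact (Complex.continuous_ofReal.comp continuous_neg).continuousAt
      exact this.tendsto.mono_left nhdsWithin_le_nhds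
  have h1 := (Complex.continuous_im.tendsto _).comp hH
  have h2 : Tendsto (Complex.im ∘ fun a => H 2 a) (𝓝[<] 1) (𝓝 (π / Real.Gamma 1)) := by
    have hc : ContinuousAt (fun a => π / Real.Gamma a) 1 := by
      refine continuousAt_const.div ?_ (Real.Gamma_pos_of_pos one_pos).ne'
      refine (Real.differentiableAt_Gamma fun m => ?_).continuousAt
      have : (0:ℝ) ≤ m := Nat.cast_nonneg m
      linarith
    refine (hc.tendsto.mono_left nhdsWithin_le_nhds).congr' ?_
    filter_upwards [Ioo_mem_nhdsLT (show (0:ℝ) < 1 by norm_num)] with a ha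
    exact (H_base two_pos ha.1 ha.2).symm
  exact tendsto_nhds_unique h1 h2

lemma H_all {σ : ℝ} (hσ : 0 < σ) (n : ℕ) : ∀ a : ℝ, 0 < a → a ≤ n + 1 →
    (H σ a).im = π / Real.Gamma a := by
  induction n with
  | zero =>
    intro a ha h
    simp only [Nat.cast_zero, zero_add] at h
    rcases h.eq_or_lt with h | h
    · rw [h]; exact H_one hσ
    · exact H_base hσ ha h
  | succ n ih =>
    intro a ha h
    push_cast at h
    by_cases h1 : a ≤ 1
    · exact ih a ha (by linarith [Nat.cast_nonneg (α := ℝ) n])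
    · push Not at h1
      have h2 := ih (a - 1) (by linarith) (by linarith)
      rw [H_rec hσ (by linarith), sub_add_cancel] at h2
      have h3 := Real.Gamma_add_one (s := a - 1) (by linarith)
      rw [sub_add_cancel] at h3
      have h4 := Real.Gamma_pos_of_pos (show 0 < a - 1 by linarith)
      have h5 : a - 1 ≠ 0 := by linarith
      rw [h3]
      field_simp at h2 ⊢
      linarith

lemma H_eq {σ a : ℝ} (hσ : 0 < σ) (ha : 0 < a) : (H σ a).im = π / Real.Gamma a := by
  obtain ⟨n, hn⟩ := exists_nat_ge a
  exact H_all hσ n a ha (by linarith)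

lemma good_g {ρ x : ℝ} (h0 : 0 < ρ) (h1 : ρ < 1) (hx : 0 < x) :
    Good (fun w => w ^ ((ρ - 1 : ℝ) : ℂ) / (w ^ (ρ : ℂ) + x))
    (fun w => ((ρ - 1 : ℝ) : ℂ) * w ^ ((ρ - 2 : ℝ) : ℂ) / (w ^ (ρ : ℂ) + x) -
      w ^ ((ρ - 1 : ℝ) : ℂ) * (ρ * w ^ ((ρ - 1 : ℝ) : ℂ)) / (w ^ (ρ : ℂ) + x) ^ 2) where
  meas := (meas_cpow _).div ((meas_cpow _).add_const _)
  meas' := (((meas_cpow _).const_mul _).div ((meas_cpow _).add_const _)).sub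
    (((meas_cpow _).mul ((meas_cpow _).const_mul _)).div (((meas_cpow _).add_const _).pow_const 2))
  hd := by
    intro σ r hσ hr
    have hw := W_slit hσ hr
    have hden : W σ r ^ (ρ : ℂ) + x ≠ 0 := by
      rw [← norm_pos_iff]
      have := (den_aux hσ hr h0 h1.le hx.le).1
      linarith
    have a1 := (Complex.hasStrictDerivAt_cpow_const (c := ((ρ - 1 : ℝ) : ℂ)) hw).hasDerivAt
    have a2 := ((Complex.hasStrictDerivAt_cpow_const (c := (ρ : ℂ)) hw).hasDerivAt).add_const (x : ℂ)
    refine (a1.div a2 hden).congr_deriv ?_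
    rw [show ((ρ - 1 : ℝ) : ℂ) - 1 = ((ρ - 2 : ℝ) : ℂ) by push_cast; ring,
      show (ρ : ℂ) - 1 = ((ρ - 1 : ℝ) : ℂ) by push_cast; ring]
    field_simp
  hb := by
    intro σ₀ hσ₀
    set A := (σ₀ / 2) ^ (ρ - 1) with hA
    set B := (σ₀ / 2) ^ (ρ - 2) with hB
    have hA0 : 0 < A := by positivity
    have hB0 : 0 < B := by positivity
    refine ⟨A / (x / 2) + (1 * B / (x / 2) + A * (1 * A) / (x / 2) ^ 2), fun σ r hσ hr => ?_⟩
    have hd := (den_aux (lt_of_lt_of_le hσ₀ hσ) hr h0 h1.le hx.le).1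
    have b1 : ‖W σ r ^ ((ρ - 1 : ℝ) : ℂ)‖ ≤ A := W_cpow_bound hσ₀ hσ (by linarith)
    have b2 : ‖W σ r ^ ((ρ - 2 : ℝ) : ℂ)‖ ≤ B := W_cpow_bound hσ₀ hσ (by linarith)
    have b3 : ‖((ρ - 1 : ℝ) : ℂ)‖ ≤ 1 := by
      rw [Complex.norm_real, Real.norm_eq_abs, abs_le]; constructor <;> linarith
    have b4 : ‖(ρ : ℂ)‖ ≤ 1 := by
      rw [Complex.norm_real, Real.norm_eq_abs, abs_le]; constructor <;> linarith
    constructor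
    · rw [norm_div]
      have : ‖W σ r ^ ((ρ - 1 : ℝ) : ℂ)‖ / ‖W σ r ^ (ρ : ℂ) + x‖ ≤ A / (x / 2) := by gcongr
      have h2 : 0 ≤ 1 * B / (x / 2) + A * (1 * A) / (x / 2) ^ 2 := by positivity
      linarith
    · refine (norm_sub_le _ _).trans ?_
      rw [norm_div, norm_div, norm_mul, norm_mul, norm_mul, norm_pow]
      have h2 : 0 ≤ A / (x / 2) := by positivity
      refine le_trans ?_ (le_add_of_nonneg_left h2)
      gcongr
  hre := by
    intro σ hσ
    rw [← Complex.ofReal_cpow hσ.le, ← Complex.ofReal_cpow hσ.le, ← Complex.ofReal_add,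
      ← Complex.ofReal_div, Complex.ofReal_im]

lemma ML_rep {ρ x : ℝ} (h0 : 0 < ρ) (h1 : ρ < 1) (hx : 0 < x) :
    mittagLeffler ρ (-x) = (∫ r in Ioi (0:ℝ), Complex.exp (W 1 r) *
      (W 1 r ^ ((ρ - 1 : ℝ) : ℂ) / (W 1 r ^ (ρ : ℂ) + x)) * (-1 + Complex.I)).im / π := by
  obtain ⟨σ, hσ, hσx⟩ : ∃ σ : ℝ, 0 < σ ∧ (σ / 2) ^ ρ = 2 * x := by
    refine ⟨2 * (2 * x) ^ (1 / ρ), by positivity, ?_⟩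
    rw [mul_div_cancel_left₀ _ two_ne_zero, ← Real.rpow_mul (by positivity),
      one_div_mul_cancel h0.ne', Real.rpow_one]
  have hinv := (good_g h0 h1 hx).invariant one_pos hσ
  rw [hinv]
  have hbound : ∀ (k : ℕ) (r : ℝ), ‖((-x : ℝ) : ℂ) ^ k * W σ r ^ ((-(ρ * k + 1) : ℝ) : ℂ)‖ ≤
      (σ / 2)⁻¹ * (1 / 2) ^ k := by
    intro k r
    have hk : (0:ℝ) ≤ ρ * k := by positivity
    have hb := W_cpow_bound (r := r) hσ (le_refl σ) (show -(ρ * k + 1) ≤ 0 by linarith)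
    rw [norm_mul, norm_pow, Complex.norm_real, norm_neg, Real.norm_of_nonneg hx.le]
    calc _ ≤ x ^ k * (σ / 2) ^ (-(ρ * k + 1)) := by gcongr
      _ = _ := by
        rw [Real.rpow_neg (by positivity), Real.rpow_add (by positivity), Real.rpow_one,
          Real.rpow_mul (by positivity), hσx, Real.rpow_natCast, mul_pow, div_pow]
        field_simp
        simp
  set F : ℕ → ℝ → ℂ := fun k r => Complex.exp (W σ r) *
    (((-x : ℝ) : ℂ) ^ k * W σ r ^ ((-(ρ * k + 1) : ℝ) : ℂ)) * (-1 + Complex.I) with hF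
  have hFi : ∀ k, IntegrableOn (F k) (Ioi 0) := fun k =>
    int_bdd (g := fun w => ((-x : ℝ) : ℂ) ^ k * w ^ ((-(ρ * k + 1) : ℝ) : ℂ))
      ((meas_cpow _).const_mul _) (fun r hr => hbound k r)
  have hsum : Summable fun k => ∫ r in Ioi (0:ℝ), ‖F k r‖ := by
    have hgeo : Summable fun k : ℕ => (∫ r in Ioi (0:ℝ), 2 * Real.exp (σ - r)) *
        ((σ / 2)⁻¹ * (1 / 2) ^ k) :=
      (summable_geometric_two.mul_left _).mul_left _
    refine Summable.of_nonneg_of_le (fun k => integral_nonneg fun r => norm_nonneg _)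
      (fun k => ?_) hgeo
    rw [← integral_mul_const]
    refine integral_mono (hFi k).norm (((int_exp σ).const_mul 2).mul_const _) fun r => ?_
    simp only [hF]
    rw [norm_mul, norm_mul, norm_exp_W]
    have h3 := norm_d
    have h4 := hbound k r
    calc _ ≤ Real.exp (σ - r) * ((σ / 2)⁻¹ * (1 / 2) ^ k) * 2 := by gcongr
      _ = _ := by ring
  have key := hasSum_integral_of_summable_integral_norm hFi hsum
  have hpt : (∫ r in Ioi (0:ℝ), ∑' k, F k r) = ∫ r in Ioi (0:ℝ), Complex.exp (W σ r) *
      (W σ r ^ ((ρ - 1 : ℝ) : ℂ) / (W σ r ^ (ρ : ℂ) + x)) * (-1 + Complex.I) := by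
    refine setIntegral_congr_fun measurableSet_Ioi fun r hr => ?_
    have hr' : (0:ℝ) ≤ r := le_of_lt hr
    have hne := W_ne hσ hr'
    have hpne : W σ r ^ (ρ : ℂ) ≠ 0 := by
      rw [Complex.cpow_def_of_ne_zero hne]; exact Complex.exp_ne_zero _
    have hden : W σ r ^ (ρ : ℂ) + x ≠ 0 := by
      rw [← norm_pos_iff]
      have := (den_aux hσ hr' h0 h1.le hx.le).1
      linarith
    have hq : ‖-(x : ℂ) / W σ r ^ (ρ : ℂ)‖ < 1 := by
      rw [norm_div, norm_neg, Complex.norm_real, Real.norm_of_nonneg hx.le, Complex.norm_cpow_real,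
        div_lt_one (by have := norm_pos_iff.2 hne; positivity)]
      have : (σ / 2) ^ ρ ≤ ‖W σ r‖ ^ ρ := by
        have := W_norm_ge r hσ
        gcongr
      linarith
    have hs := (hasSum_geometric_of_norm_lt_one hq).mul_left
      (Complex.exp (W σ r) * (W σ r)⁻¹ * (-1 + Complex.I))
    have hterm : ∀ k : ℕ, Complex.exp (W σ r) * (W σ r)⁻¹ * (-1 + Complex.I) *
        (-(x : ℂ) / W σ r ^ (ρ : ℂ)) ^ k = F k r := by
      intro k
      simp only [hF]
      have : W σ r ^ ((-(ρ * k + 1) : ℝ) : ℂ) = (W σ r)⁻¹ * ((W σ r ^ (ρ : ℂ)) ^ k)⁻¹ := by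
        rw [Complex.ofReal_neg, Complex.cpow_neg, Complex.ofReal_add, Complex.cpow_add _ _ hne,
          Complex.ofReal_one, Complex.cpow_one, ← Complex.cpow_mul_nat]
        push_cast
        rw [mul_inv, mul_comm]
      rw [this, div_pow]
      push_cast
      field_simp
    simp_rw [hterm] at hs
    rw [hs.tsum_eq]
    have hm : W σ r ^ ((ρ - 1 : ℝ) : ℂ) = W σ r ^ (ρ : ℂ) / W σ r := by
      rw [Complex.ofReal_sub, Complex.ofReal_one, Complex.cpow_sub _ _ hne, Complex.cpow_one]
    have e : 1 - -(x : ℂ) / W σ r ^ (ρ : ℂ) = (W σ r ^ (ρ : ℂ) + x) / W σ r ^ (ρ : ℂ) := by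
      field_simp
      ring
    rw [hm, e, inv_div]
    field_simp
  rw [hpt] at key
  have key2 := (Complex.imCLM.hasSum key).div_const π
  simp only [Complex.imCLM_apply] at key2
  rw [← key2.tsum_eq]
  unfold mittagLeffler
  congr 1
  funext k
  have hk : (0:ℝ) ≤ ρ * k := by positivity
  have e : (∫ r in Ioi (0:ℝ), F k r) = (((-x) ^ k : ℝ) : ℂ) * H σ (ρ * k + 1) := by
    unfold H
    rw [← integral_const_mul]
    congr 1
    funext r
    simp only [hF]
    push_cast
    ring
  rw [e, Complex.im_ofReal_mul, H_eq hσ (by linarith)]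
  field_simp

/-- normalised variable -/
noncomputable def zf (lam ℓ ρ r : ℝ) : ℂ :=
  Complex.exp (ρ * (Complex.log (W 1 r) - ℓ)) / lam

lemma zf_eq {lam ℓ ρ r : ℝ} (hr : 0 ≤ r) :
    zf lam ℓ ρ r = W 1 r ^ (ρ : ℂ) / ((lam * Real.exp (ρ * ℓ) : ℝ) : ℂ) := by
  unfold zf
  rw [Complex.cpow_def_of_ne_zero (W_ne one_pos hr), mul_sub, Complex.exp_sub]
  push_cast
  rw [mul_comm (Complex.log _), div_div, mul_comm (lam : ℂ)]

lemma zf_den {lam ℓ ρ r : ℝ} (hl : 0 < lam) (h0 : 0 < ρ) (h1 : ρ ≤ 1) (hr : 0 ≤ r) :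
    1 / 2 ≤ ‖1 + zf lam ℓ ρ r‖ := by
  rw [zf_eq hr]
  set x := lam * Real.exp (ρ * ℓ) with hx
  have hx0 : 0 < x := by positivity
  have h := (den_aux one_pos hr h0 h1 hx0.le).1
  have hxc : (x : ℂ) ≠ 0 := Complex.ofReal_ne_zero.2 hx0.ne'
  have e : 1 + W 1 r ^ (ρ : ℂ) / (x : ℂ) = (W 1 r ^ (ρ : ℂ) + x) / x := by
    field_simp; ring
  rw [e, norm_div, Complex.norm_real, Real.norm_of_nonneg hx0.le, le_div_iff₀ hx0]
  linarith

lemma zf_norm {lam ℓ ρ r : ℝ} (hl : 0 < lam) (h0 : 0 < ρ) (h1 : ρ ≤ 1) (hr : 0 ≤ r) :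
    ‖zf lam ℓ ρ r‖ ≤ (1 + 2 * r) / (lam * Real.exp (ρ * ℓ)) := by
  rw [zf_eq hr, norm_div, Complex.norm_real, Real.norm_of_nonneg (by positivity),
    Complex.norm_cpow_real]
  gcongr
  calc ‖W 1 r‖ ^ ρ ≤ (1 + 2 * r) ^ ρ := by
        have := W_norm_le one_pos hr
        gcongr
    _ ≤ (1 + 2 * r) ^ (1:ℝ) := Real.rpow_le_rpow_of_exponent_le (by linarith) h1
    _ = _ := Real.rpow_one _

lemma log_norm {r : ℝ} (hr : 0 ≤ r) : ‖Complex.log (W 1 r)‖ ≤ 5 + 2 * r := by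
  have h := Complex.norm_le_abs_re_add_abs_im (Complex.log (W 1 r))
  rw [Complex.log_re, Complex.log_im] at h
  have hp : 0 < ‖W 1 r‖ := norm_pos_iff.2 (W_ne one_pos hr)
  have h1 := Real.log_le_sub_one_of_pos hp
  have h2 := Real.one_sub_inv_le_log_of_pos hp
  have h3 := W_norm_le one_pos hr
  have h4 := W_norm_ge (σ := 1) r one_pos
  have h5 : ‖W 1 r‖⁻¹ ≤ (1 / 2)⁻¹ := by gcongr
  have h6 : |Real.log ‖W 1 r‖| ≤ 1 + 2 * r := by
    rw [abs_le]; constructor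
    · norm_num at h5; linarith
    · linarith
  have h7 : |(W 1 r).arg| ≤ 4 := by
    have := Complex.abs_arg_le_pi (W 1 r)
    linarith [Real.pi_le_four]
  linarith

noncomputable def Q (lam ℓ ρ r : ℝ) : ℂ :=
  Complex.exp (W 1 r) * ((W 1 r)⁻¹ * (zf lam ℓ ρ r ^ 2 / (1 + zf lam ℓ ρ r))) * (-1 + Complex.I)

noncomputable def Q' (lam ℓ ρ r : ℝ) : ℂ :=
  Complex.exp (W 1 r) * ((W 1 r)⁻¹ * ((Complex.log (W 1 r) - ℓ) * zf lam ℓ ρ r ^ 2 *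
    (2 + zf lam ℓ ρ r) / (1 + zf lam ℓ ρ r) ^ 2)) * (-1 + Complex.I)

noncomputable def C0 (r : ℝ) : ℝ := 24 * ((5 + 2 * r) * (1 + 2 * r) ^ 2) * Real.exp (1 - r)

lemma C0_int : IntegrableOn C0 (Ioi 0) := by
  refine Integrable.mono' ((exp_neg_integrableOn_Ioi 0 (b := 1 / 2) (by norm_num)).const_mul
    (24 * (40 * 40 ^ 2) * Real.exp 1)) ?_ ?_
  · apply Measurable.aestronglyMeasurable
    unfold C0
    fun_prop
  · refine (ae_restrict_iff' measurableSet_Ioi).2 (Eventually.of_forall fun r hr => ?_)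
    have hr' : 0 < r := hr
    have h1 := Real.add_one_le_exp (r / 20)
    have h2 : 5 + 2 * r ≤ 40 * Real.exp (r / 20) := by linarith
    have h3 : 1 + 2 * r ≤ 40 * Real.exp (r / 20) := by linarith
    unfold C0
    rw [Real.norm_of_nonneg (by positivity)]
    calc _ ≤ 24 * ((40 * Real.exp (r / 20)) * (40 * Real.exp (r / 20)) ^ 2) *
          Real.exp (1 - r) := by gcongr
      _ = 24 * (40 * 40 ^ 2) * (Real.exp (r / 20) * Real.exp (r / 20) ^ 2 *
          Real.exp (1 - r)) := by ring
      _ = 24 * (40 * 40 ^ 2) * Real.exp (1 + (3 * r / 20 - r)) := by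
          rw [← Real.exp_nat_mul, ← Real.exp_add, ← Real.exp_add]
          congr 2
          push_cast
          ring
      _ ≤ 24 * (40 * 40 ^ 2) * Real.exp (1 + -(1 / 2) * r) := by
          gcongr
          linarith
      _ = _ := by rw [Real.exp_add]; ring

lemma Q'_bound {lam ℓ ρ r : ℝ} (hl : 0 < lam) (hℓ : 0 ≤ ℓ) (h0 : 0 < ρ) (h1 : ρ ≤ 1)
    (hr : 0 ≤ r) : ‖Q' lam ℓ ρ r‖ ≤ (1 + ℓ) / (lam * Real.exp (ρ * ℓ)) ^ 2 * C0 r := by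
  have hz := zf_norm (ℓ := ℓ) hl h0 h1 hr
  have hd := zf_den (ℓ := ℓ) hl h0 h1 hr
  set z := zf lam ℓ ρ r with hzdef
  set x := lam * Real.exp (ρ * ℓ) with hx
  have hx0 : 0 < x := by positivity
  have hL : ‖Complex.log (W 1 r) - ℓ‖ ≤ (5 + 2 * r) * (1 + ℓ) := by
    have a1 := norm_sub_le (Complex.log (W 1 r)) (ℓ : ℂ)
    rw [Complex.norm_real, Real.norm_of_nonneg hℓ] at a1
    have := log_norm hr
    nlinarith
  have hW : ‖(W 1 r)⁻¹‖ ≤ 2 := by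
    rw [norm_inv]
    have h4 := W_norm_ge (σ := 1) r one_pos
    have h5 : ‖W 1 r‖⁻¹ ≤ (1 / 2)⁻¹ := by gcongr
    norm_num at h5; exact h5
  have hf : ‖2 + z‖ / ‖1 + z‖ ^ 2 ≤ 6 := by
    have hp : 0 < ‖1 + z‖ := by linarith
    have : ‖2 + z‖ ≤ 1 + ‖1 + z‖ := by
      calc ‖2 + z‖ = ‖1 + (1 + z)‖ := by congr 1; ring
        _ ≤ ‖(1:ℂ)‖ + ‖1 + z‖ := norm_add_le _ _
        _ = _ := by simp
    rw [div_le_iff₀ (by positivity)]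
    nlinarith
  unfold Q' C0
  rw [← hzdef]
  rw [norm_mul, norm_mul, norm_mul, norm_exp_W, norm_div, norm_mul, norm_mul, norm_pow, norm_pow,
    mul_div_assoc]
  have h3 := norm_d
  calc _ ≤ Real.exp (1 - r) * (2 * (((5 + 2 * r) * (1 + ℓ)) * ((1 + 2 * r) / x) ^ 2 * 6)) * 2 := by
        gcongr
    _ = _ := by field_simp; ring

lemma W_meas : Measurable (W 1) := (W_continuous 1).measurable

lemma zf_meas (lam ℓ ρ : ℝ) : Measurable (zf lam ℓ ρ) := by
  have := W_meas
  unfold zf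
  fun_prop

lemma Q_meas (lam ℓ ρ : ℝ) : Measurable (Q lam ℓ ρ) := by
  have := W_meas
  have := zf_meas lam ℓ ρ
  unfold Q
  fun_prop

lemma Q'_meas (lam ℓ ρ : ℝ) : Measurable (Q' lam ℓ ρ) := by
  have := W_meas
  have := zf_meas lam ℓ ρ
  unfold Q'
  fun_prop

lemma Q_hasDeriv {lam ℓ ρ r : ℝ} (hl : 0 < lam) (h0 : 0 < ρ) (h1 : ρ ≤ 1)
    (hr : 0 ≤ r) : HasDerivAt (fun ρ => Q lam ℓ ρ r) (Q' lam ℓ ρ r) ρ := by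
  have hd := zf_den (ℓ := ℓ) hl h0 h1 hr
  have hne : 1 + zf lam ℓ ρ r ≠ 0 := by
    rw [← norm_pos_iff]; linarith
  have hz : HasDerivAt (fun ρ => zf lam ℓ ρ r)
      ((Complex.log (W 1 r) - ℓ) * zf lam ℓ ρ r) ρ := by
    unfold zf
    have := (((Complex.ofRealCLM.hasDerivAt (x := ρ)).mul_const
      (Complex.log (W 1 r) - ℓ)).cexp).div_const (lam : ℂ)
    refine this.congr_deriv ?_
    simp
    ring
  unfold Q Q'
  refine (((((hz.pow 2).div (hz.const_add 1) hne).const_mul ((W 1 r)⁻¹)).const_mul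
    (Complex.exp (W 1 r))).mul_const (-1 + Complex.I)).congr_deriv ?_
  simp only [Pi.pow_apply]
  congr 3
  field_simp
  push_cast
  ring

lemma Q_split {lam ℓ ρ r : ℝ} (hl : 0 < lam) (h0 : 0 < ρ) (h1 : ρ < 1) (hr : 0 ≤ r) :
    Q lam ℓ ρ r = (((lam * Real.exp (ρ * ℓ))⁻¹ : ℝ) : ℂ) * (Complex.exp (W 1 r) *
      W 1 r ^ ((-(1 - ρ) : ℝ) : ℂ) * (-1 + Complex.I)) -
      Complex.exp (W 1 r) * (W 1 r ^ ((ρ - 1 : ℝ) : ℂ) /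
        (W 1 r ^ (ρ : ℂ) + (lam * Real.exp (ρ * ℓ) : ℝ))) * (-1 + Complex.I) := by
  unfold Q
  rw [zf_eq hr]
  set x := lam * Real.exp (ρ * ℓ) with hx
  have hx0 : 0 < x := by positivity
  have hxc : (x : ℂ) ≠ 0 := Complex.ofReal_ne_zero.2 hx0.ne'
  have hne := W_ne one_pos hr
  have hden : W 1 r ^ (ρ : ℂ) + x ≠ 0 := by
    rw [← norm_pos_iff]
    have := (den_aux one_pos hr h0 h1.le hx0.le).1
    linarith
  have hm : W 1 r ^ ((ρ - 1 : ℝ) : ℂ) = W 1 r ^ (ρ : ℂ) / W 1 r := by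
    rw [Complex.ofReal_sub, Complex.ofReal_one, Complex.cpow_sub _ _ hne, Complex.cpow_one]
  have e : 1 + W 1 r ^ (ρ : ℂ) / (x : ℂ) = (W 1 r ^ (ρ : ℂ) + x) / x := by
    field_simp; ring
  rw [neg_sub, hm, e, Complex.ofReal_inv]
  field_simp
  ring

lemma Q_int_and {lam ℓ ρ : ℝ} (hl : 0 < lam) (h0 : 0 < ρ) (h1 : ρ < 1) :
    IntegrableOn (Q lam ℓ ρ) (Ioi 0) ∧
    mittagLeffler ρ (-(lam * Real.exp (ρ * ℓ))) =
      (lam * Real.exp (ρ * ℓ))⁻¹ * (1 / Real.Gamma (1 - ρ)) -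
        (∫ r in Ioi (0:ℝ), Q lam ℓ ρ r).im / π := by
  have hx0 : 0 < lam * Real.exp (ρ * ℓ) := by positivity
  have i1 : IntegrableOn (fun r : ℝ => (((lam * Real.exp (ρ * ℓ))⁻¹ : ℝ) : ℂ) *
      (Complex.exp (W 1 r) * W 1 r ^ ((-(1 - ρ) : ℝ) : ℂ) * (-1 + Complex.I))) (Ioi 0) :=
    Integrable.const_mul (int_bdd (meas_cpow _) (fun r hr =>
      W_cpow_bound one_pos le_rfl (by linarith))) _
  obtain ⟨M, hM⟩ := (good_g h0 h1 hx0).hb 1 one_pos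
  have i2 := int_bdd (σ := 1) (good_g h0 h1 hx0).meas (fun r hr => (hM 1 r le_rfl hr).1)
  have heq : EqOn (Q lam ℓ ρ) _ (Ioi 0) := fun r hr =>
    Q_split (ℓ := ℓ) hl h0 h1 (le_of_lt (mem_Ioi.1 hr))
  refine ⟨IntegrableOn.congr_fun (i1.sub i2) heq.symm measurableSet_Ioi, ?_⟩
  rw [setIntegral_congr_fun measurableSet_Ioi heq, integral_sub i1 i2, ML_rep h0 h1 hx0,
    integral_const_mul, Complex.sub_im, Complex.im_ofReal_mul]
  have hH := H_eq (σ := 1) (a := 1 - ρ) one_pos (by linarith)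
  unfold H at hH
  rw [hH]
  generalize (∫ r in Ioi (0:ℝ), Complex.exp (W 1 r) * (W 1 r ^ ((ρ - 1 : ℝ) : ℂ) /
    (W 1 r ^ (ρ : ℂ) + ((lam * Real.exp (ρ * ℓ) : ℝ) : ℂ))) * (-1 + Complex.I)).im = J
  field_simp
  ring

lemma intQ_hasDeriv {lam ℓ ρ : ℝ} (hl : 0 < lam) (hℓ : 0 ≤ ℓ) (h0 : 0 < ρ) (h1 : ρ < 1) :
    HasDerivAt (fun ρ => ∫ r in Ioi (0:ℝ), Q lam ℓ ρ r) (∫ r in Ioi (0:ℝ), Q' lam ℓ ρ r) ρ := by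
  refine (hasDerivAt_integral_of_dominated_loc_of_deriv_le (𝕜 := ℝ)
      (μ := volume.restrict (Ioi (0:ℝ))) (x₀ := ρ) (s := Ioo 0 1)
      (F := fun ρ r => Q lam ℓ ρ r) (F' := fun ρ r => Q' lam ℓ ρ r)
      (bound := fun r => (1 + ℓ) / lam ^ 2 * C0 r)
      (Ioo_mem_nhds h0 h1)
      (Eventually.of_forall fun y => (Q_meas _ _ _).aestronglyMeasurable)
      (Q_int_and hl h0 h1).1 (Q'_meas _ _ _).aestronglyMeasurable ?_ (C0_int.const_mul _) ?_).2
  · refine (ae_restrict_iff' measurableSet_Ioi).2 (Eventually.of_forall fun r hr x hx => ?_)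
    have hr' : 0 < r := hr
    refine (Q'_bound hl hℓ hx.1 hx.2.le hr'.le).trans ?_
    have hC : 0 ≤ C0 r := by unfold C0; positivity
    have : 1 ≤ Real.exp (x * ℓ) := Real.one_le_exp (mul_nonneg hx.1.le hℓ)
    gcongr
    nlinarith
  · refine (ae_restrict_iff' measurableSet_Ioi).2 (Eventually.of_forall fun r hr x hx => ?_)
    exact Q_hasDeriv hl hx.1 hx.2.le (le_of_lt (mem_Ioi.1 hr))

lemma intQ'_bound {lam ℓ ρ : ℝ} (hl : 0 < lam) (hℓ : 0 ≤ ℓ) (h0 : 0 < ρ) (h1 : ρ < 1) :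
    |(∫ r in Ioi (0:ℝ), Q' lam ℓ ρ r).im| ≤
      (1 + ℓ) / (lam * Real.exp (ρ * ℓ)) ^ 2 * ∫ r in Ioi (0:ℝ), C0 r := by
  refine (Complex.abs_im_le_norm _).trans ?_
  rw [← integral_const_mul]
  refine norm_integral_le_of_norm_le (C0_int.const_mul _) ?_
  refine (ae_restrict_iff' measurableSet_Ioi).2 (Eventually.of_forall fun r hr => ?_)
  exact Q'_bound hl hℓ h0 h1.le (le_of_lt (mem_Ioi.1 hr))

lemma Gamma_diff {y : ℝ} (hy : 0 < y) : DifferentiableAt ℝ Real.Gamma y := by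
  refine Real.differentiableAt_Gamma fun m => ?_
  have : (0:ℝ) ≤ m := Nat.cast_nonneg m
  linarith

lemma Gamma_le_one {y : ℝ} (h1 : 1 ≤ y) (h2 : y ≤ 2) : Real.Gamma y ≤ 1 := by
  have hcv := Real.convexOn_Gamma.2
  have h := hcv (mem_Ioi.2 (one_pos : (0:ℝ) < 1)) (mem_Ioi.2 (two_pos : (0:ℝ) < 2))
    (show (0:ℝ) ≤ 2 - y by linarith) (show (0:ℝ) ≤ y - 1 by linarith) (by ring)
  simp only [smul_eq_mul, Real.Gamma_one, Real.Gamma_two] at h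
  rw [show (2 - y) * 1 + (y - 1) * 2 = y by ring] at h
  linarith

lemma digamma_le {y : ℝ} (h1 : 1 ≤ y) (h2 : y ≤ 2) :
    deriv Real.Gamma y ≤ Real.Gamma y := by
  have hy : 0 < y := by linarith
  have hG := Real.Gamma_pos_of_pos hy
  have hd : HasDerivAt (Real.log ∘ Real.Gamma) (deriv Real.Gamma y / Real.Gamma y) y :=
    (Gamma_diff hy).hasDerivAt.log hG.ne'
  have h := Real.convexOn_log_Gamma.le_slope_of_hasDerivAt (mem_Ioi.2 hy)
    (mem_Ioi.2 (show 0 < y + 1 by linarith)) (by linarith) hd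
  rw [slope_def_field] at h
  simp only [Function.comp] at h
  rw [Real.Gamma_add_one hy.ne', Real.log_mul hy.ne' hG.ne'] at h
  have hlog := Real.log_le_sub_one_of_pos hy
  have h3 : deriv Real.Gamma y / Real.Gamma y ≤ 1 := by
    refine h.trans ?_
    rw [show y + 1 - y = 1 by ring]
    linarith
  rwa [div_le_one hG] at h3

lemma main_deriv {lam ℓ ρ : ℝ} (hl : 0 < lam) (hℓ : 1 ≤ ℓ) (h0 : 0 < ρ) (h1 : ρ < 1) :
    ∃ D : ℝ, HasDerivAt (fun ρ => (lam * Real.exp (ρ * ℓ))⁻¹ * (1 / Real.Gamma (1 - ρ))) D ρ ∧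
      D ≤ -(lam * Real.exp (ρ * ℓ))⁻¹ := by
  have hy : 0 < 2 - ρ := by linarith
  have hG := Real.Gamma_pos_of_pos hy
  have hG1 := Gamma_le_one (y := 2 - ρ) (by linarith) (by linarith)
  have hdg := digamma_le (y := 2 - ρ) (by linarith) (by linarith)
  set x := lam * Real.exp (ρ * ℓ) with hx
  have hx0 : 0 < x := by positivity
  set G := Real.Gamma (2 - ρ) with hGd
  set G' := deriv Real.Gamma (2 - ρ) with hGd'
  have d1 : HasDerivAt (fun ρ => (lam * Real.exp (ρ * ℓ))⁻¹) (-(x * ℓ) / x ^ 2) ρ := by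
    have := (((hasDerivAt_id ρ).mul_const ℓ).exp.const_mul lam).inv hx0.ne'
    refine this.congr_deriv ?_
    simp only [id, hx]
    ring
  have d2 : HasDerivAt (fun ρ => (1 - ρ) / Real.Gamma (2 - ρ))
      ((-1 * G - (1 - ρ) * (G' * -1)) / G ^ 2) ρ := by
    have a1 : HasDerivAt (fun ρ : ℝ => 1 - ρ) (-1) ρ := (hasDerivAt_id ρ).const_sub 1
    have a2 : HasDerivAt (fun ρ : ℝ => 2 - ρ) (-1) ρ := (hasDerivAt_id ρ).const_sub 2
    have a3 := HasDerivAt.comp ρ (Gamma_diff hy).hasDerivAt a2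
    exact a1.div a3 hG.ne'
  refine ⟨_, (d1.mul d2).congr_of_eventuallyEq ?_, ?_⟩
  · filter_upwards [Iio_mem_nhds h1] with s hs
    have hs' : s < 1 := hs
    have := Real.Gamma_add_one (s := 1 - s) (by linarith)
    rw [show 1 - s + 1 = 2 - s by ring] at this
    simp only [Pi.mul_apply]
    rw [this]
    have := Real.Gamma_pos_of_pos (show 0 < 1 - s by linarith)
    have h3 : 1 - s ≠ 0 := by linarith
    field_simp
  · have e : -(x * ℓ) / x ^ 2 * ((1 - ρ) / G) + x⁻¹ * ((-1 * G - (1 - ρ) * (G' * -1)) / G ^ 2)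
        = -x⁻¹ * (((1 - ρ) * (ℓ * G - G') + G) / G ^ 2) := by
      field_simp; ring
    rw [← hx, e]
    have h5 : 1 ≤ ((1 - ρ) * (ℓ * G - G') + G) / G ^ 2 := by
      rw [le_div_iff₀ (by positivity)]
      have : 0 ≤ (1 - ρ) * (ℓ * G - G') := mul_nonneg (by linarith) (by nlinarith)
      nlinarith
    have : 0 < x⁻¹ := by positivity
    nlinarith

lemma ML_deriv {lam ℓ ρ : ℝ} (hl : 0 < lam) (hℓ : 1 ≤ ℓ) (h0 : 0 < ρ) (h1 : ρ < 1)
    (hK : (1 + ℓ) * (∫ r in Ioi (0:ℝ), C0 r) < lam * Real.exp (ρ * ℓ)) :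
    ∃ D : ℝ, HasDerivAt (fun ρ => mittagLeffler ρ (-(lam * Real.exp (ρ * ℓ)))) D ρ ∧ D < 0 := by
  obtain ⟨D, hD, hD'⟩ := main_deriv hl hℓ h0 h1
  have hQ := Complex.imCLM.hasFDerivAt.comp_hasDerivAt ρ (intQ_hasDeriv (ℓ := ℓ) hl (by linarith) h0 h1)
  have hb := intQ'_bound (ℓ := ℓ) hl (by linarith) h0 h1
  refine ⟨_, (hD.sub (hQ.div_const π)).congr_of_eventuallyEq ?_, ?_⟩
  · filter_upwards [Ioo_mem_nhds h0 h1] with s hs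
    exact (Q_int_and hl hs.1 hs.2).2
  · rw [Complex.imCLM_apply]
    set x := lam * Real.exp (ρ * ℓ) with hx
    have hx0 : 0 < x := by positivity
    set J := (∫ r in Ioi (0:ℝ), Q' lam ℓ ρ r).im
    have h2 : (1 + ℓ) / x ^ 2 * (∫ r in Ioi (0:ℝ), C0 r) < x⁻¹ := by
      rw [div_mul_eq_mul_div, div_lt_iff₀ (by positivity)]
      have : x⁻¹ * x ^ 2 = x := by field_simp
      rwa [this]
    have h3 : |J / π| ≤ |J| := by
      rw [abs_div, abs_of_pos Real.pi_pos]
      exact div_le_self (abs_nonneg _) (by linarith [Real.pi_gt_three])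
    have h4 := neg_abs_le (J / π)
    linarith

/-- For `0 < ρ₀ < 1` and `λ₀ > 0` there is `T₀ = T₀(λ₀, ρ₀) > 0` such that for all
`t₀ ≥ T₀` and every constant `c ≥ 0`, the function `U(t₀, ρ) = c·E_ρ(−λ₀ t₀^ρ)` is
monotonically decreasing in `ρ` on `[ρ₀, 1)`, strictly so when `c > 0`. -/
theorem stmt1 (ρ₀ lam₀ : ℝ) (hρ₀ : 0 < ρ₀) (hρ₀' : ρ₀ < 1) (hlam₀ : 0 < lam₀) :
    ∃ T₀ : ℝ, 0 < T₀ ∧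
      ∀ t₀ : ℝ, T₀ ≤ t₀ → ∀ c : ℝ, 0 ≤ c →
        AntitoneOn (fun ρ : ℝ => c * mittagLeffler ρ (-(lam₀ * t₀ ^ ρ))) (Set.Ico ρ₀ 1) ∧
        (0 < c →
          StrictAntiOn (fun ρ : ℝ => c * mittagLeffler ρ (-(lam₀ * t₀ ^ ρ)))
            (Set.Ico ρ₀ 1)) := by
  set K := ∫ r in Ioi (0:ℝ), C0 r with hK
  have hK0 : 0 ≤ K := by
    refine setIntegral_nonneg measurableSet_Ioi fun r hr => ?_
    have : 0 < r := hr
    unfold C0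
    positivity
  have hev : ∀ᶠ t : ℝ in atTop, ‖Real.log t‖ ≤ lam₀ / (4 * (K + 1)) * ‖t ^ ρ₀‖ :=
    (isLittleO_log_rpow_atTop hρ₀).def (by positivity)
  obtain ⟨T, hT⟩ := eventually_atTop.1 hev
  refine ⟨max T (Real.exp 1), lt_max_of_lt_right (Real.exp_pos 1), fun t ht c hc => ?_⟩
  have hte : Real.exp 1 ≤ t := (le_max_right _ _).trans ht
  have ht0 : 0 < t := (Real.exp_pos 1).trans_le hte
  have hℓ : 1 ≤ Real.log t := (Real.le_log_iff_exp_le ht0).2 hte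
  have hlog := hT t ((le_max_left _ _).trans ht)
  rw [Real.norm_of_nonneg (by linarith), Real.norm_of_nonneg (by positivity)] at hlog
  have hpow : ∀ ρ : ℝ, t ^ ρ = Real.exp (ρ * Real.log t) := fun ρ => by
    rw [Real.rpow_def_of_pos ht0, mul_comm]
  have hder : ∀ ρ ∈ Ico ρ₀ 1, ∃ D : ℝ,
      HasDerivAt (fun ρ => mittagLeffler ρ (-(lam₀ * t ^ ρ))) D ρ ∧ D < 0 := by
    intro ρ hρ
    simp_rw [hpow]
    refine ML_deriv hlam₀ hℓ (hρ₀.trans_le hρ.1) hρ.2 ?_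
    rw [← hpow ρ, ← hK]
    have h1 : t ^ ρ₀ ≤ t ^ ρ := Real.rpow_le_rpow_of_exponent_le
      (by linarith [Real.add_one_le_exp (1:ℝ)]) hρ.1
    have h2 : lam₀ / (4 * (K + 1)) * t ^ ρ₀ * (4 * (K + 1)) = lam₀ * t ^ ρ₀ := by
      field_simp
    have h3 : Real.log t * (4 * (K + 1)) ≤ lam₀ * t ^ ρ₀ := by
      rw [← h2]; gcongr
    have h4 : lam₀ * t ^ ρ₀ ≤ lam₀ * t ^ ρ := by gcongr
    nlinarith
  have hanti : StrictAntiOn (fun ρ => mittagLeffler ρ (-(lam₀ * t ^ ρ))) (Ico ρ₀ 1) := by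
    refine strictAntiOn_of_deriv_neg (convex_Ico _ _) (fun ρ hρ => ?_) (fun ρ hρ => ?_)
    · obtain ⟨D, hD, _⟩ := hder ρ hρ
      exact hD.continuousAt.continuousWithinAt
    · obtain ⟨D, hD, hD'⟩ := hder ρ (interior_subset hρ)
      rw [hD.deriv]; exact hD'
  refine ⟨fun a ha b hb hab => ?_, fun hc' a ha b hb hab => ?_⟩
  · exact mul_le_mul_of_nonneg_left (hanti.antitoneOn ha hb hab) hc
  · exact mul_lt_mul_of_pos_left (hanti ha hb hab) hc'
end
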